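/- Let φ : [0,∞) → [0,∞) be an Orlicz function (convex, φ(0)=0, φ>0 on (0,∞)), and let w be a non-increasing positive function on I=(0,a), 0<a≤∞, with W(t)=∫₀ᵗ w dm finite on I. Let f be a measurable function on I belonging to L₁+M_W (i.e. f = u + h a.e. with ∫_I |u| dm < ∞ and sup_{x∈I}(1/W(x))∫₀ˣ h* dm < ∞), so that the Halperin level function f⁰ of f with respect to w is finite. Then inf{ ∫_I φ(g*/w)·w dm : g measurable on I with locally integrable g* and f ≺ g } = ∫_I φ(f⁰/w)·w dm, the equality understood in [0,∞]; that is, the modular Q(f) equals M(f⁰). -/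

import Mathlib

open MeasureTheory Set Filter
open scoped ENNReal

/-- The interval `(0, a)` for `a : ℝ≥0∞` (equals `(0,∞)` when `a = ∞`). -/
def Iset (a : ℝ≥0∞) : Set ℝ := {x : ℝ | 0 < x ∧ ENNReal.ofReal x < a}

/-- Lebesgue measure restricted to the interval `(0,a)`. -/
noncomputable def volI (a : ℝ≥0∞) : Measure ℝ := volume.restrict (Iset a)

/-- Decreasing rearrangement of an `ℝ≥0∞`-valued function with respect to a measure `μ`:
`f^{*,μ}(t) = inf {s > 0 : μ({f > s}) ≤ t}`. -/
noncomputable def rearrE (μ : Measure ℝ) (f : ℝ → ℝ≥0∞) (t : ℝ) : ℝ≥0∞ :=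
  sInf {s : ℝ≥0∞ | 0 < s ∧ μ {x | s < f x} ≤ ENNReal.ofReal t}

/-- Decreasing rearrangement of a real function with respect to a measure `μ` on `ℝ`:
`f^{*,μ}(t) = inf {s > 0 : μ({|f| > s}) ≤ t}`. -/
noncomputable def rearr (μ : Measure ℝ) (f : ℝ → ℝ) (t : ℝ) : ℝ≥0∞ :=
  rearrE μ (fun x => ENNReal.ofReal |f x|) t

/-- The measure `w·dm` on the set `I`. -/
noncomputable def wMeas (I : Set ℝ) (w : ℝ → ℝ) : Measure ℝ :=
  (volume.restrict I).withDensity (fun t => ENNReal.ofReal (w t))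

/-- `W(t) = ∫₀ᵗ w dm`. -/
noncomputable def Wfun (w : ℝ → ℝ) (t : ℝ) : ℝ := ∫ s in Set.Ioo (0:ℝ) t, w s

/-- `b = ∫_I w dm` as an extended real number. -/
noncomputable def bval (a : ℝ≥0∞) (w : ℝ → ℝ) : ℝ≥0∞ := ∫⁻ x in Iset a, ENNReal.ofReal (w x)

open scoped Classical

/-- Halperin's ratio `R(α,β) = (∫_α^β g dm)/(∫_α^β w dm)` for finite `β`. -/
noncomputable def Rq (w : ℝ → ℝ) (g : ℝ → ℝ≥0∞) (α β : ℝ) : ℝ≥0∞ :=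
  (∫⁻ t in Set.Ioo α β, g t) / (∫⁻ t in Set.Ioo α β, ENNReal.ofReal (w t))

/-- Halperin's ratio `R(α,β)` for `β ∈ (0,∞]`, with `R(α,∞) = limsup_{t→∞} R(α,t)`. -/
noncomputable def RR (w : ℝ → ℝ) (g : ℝ → ℝ≥0∞) (α : ℝ) (β : ℝ≥0∞) : ℝ≥0∞ :=
  if β = ∞ then Filter.limsup (fun t => Rq w g α t) Filter.atTop else Rq w g α β.toReal

/-- `(α,β) ⊆ (0,a)` is a level interval of `g` with respect to `w`:
`0 < R(α,β)` and `R(α,t) ≤ R(α,β)` for all `t ∈ (α,β)`. -/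
def IsLevelInterval (a : ℝ≥0∞) (w : ℝ → ℝ) (g : ℝ → ℝ≥0∞) (α : ℝ) (β : ℝ≥0∞) : Prop :=
  0 ≤ α ∧ ENNReal.ofReal α < β ∧ β ≤ a ∧ 0 < RR w g α β ∧
    ∀ t : ℝ, α < t → ENNReal.ofReal t < β → Rq w g α t ≤ RR w g α β

/-- A maximal level interval: a level interval contained in no strictly larger one. -/
def IsMaxLevelInterval (a : ℝ≥0∞) (w : ℝ → ℝ) (g : ℝ → ℝ≥0∞) (α : ℝ) (β : ℝ≥0∞) : Prop :=
  IsLevelInterval a w g α β ∧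
    ∀ α' β', IsLevelInterval a w g α' β' → α' ≤ α → β ≤ β' → α' = α ∧ β' = β

/-- Halperin's level function of (the non-negative, decreasing) `g` with respect to `w`:
equal to `R(α,β)·w(t)` on each maximal level interval `(α,β)` and to `g(t)` elsewhere. -/
noncomputable def levelFun (a : ℝ≥0∞) (w : ℝ → ℝ) (g : ℝ → ℝ≥0∞) (t : ℝ) : ℝ≥0∞ :=
  if h : ∃ α β, IsMaxLevelInterval a w g α β ∧ α < t ∧ ENNReal.ofReal t < β then
    RR w g h.choose h.choose_spec.choose * ENNReal.ofReal (w t)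
  else g t

/-- The Marcinkiewicz norm `‖h‖_{M_W} = sup_{x∈I} (1/W(x)) ∫₀ˣ h* dm`. -/
noncomputable def MWnorm (a : ℝ≥0∞) (w h : ℝ → ℝ) : ℝ≥0∞ :=
  ⨆ x ∈ Iset a,
    (∫⁻ t in Set.Ioo 0 x, rearr (volI a) h t) / (∫⁻ t in Set.Ioo 0 x, ENNReal.ofReal (w t))

/-- Extension of an Orlicz function `φ` to `[0,∞]`. -/
noncomputable def phiE (φ : ℝ → ℝ) (x : ℝ≥0∞) : ℝ≥0∞ :=
  if x = ∞ then ∞ else ENNReal.ofReal (φ x.toReal)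

/-!
For a decreasing `v` on `(0, a)` put `k(t) = inf_{0 ≤ α < t} sup_{t < β ≤ a} R(α, β)`. This min-max
is decreasing in `t`, equals `R(α, β)` on every maximal level interval `(α, β)`, and equals `v / w`
almost everywhere off the maximal level intervals; hence `v⁰ = k · w` almost everywhere. A
superlevel set of `k` is an initial segment that contains or misses each maximal level interval, so
`k · w` and `v` have the same integral over it, which is at most that of `g*` when `v = f*` and
`f ≺ g`. By the layer-cake formula the same comparison holds after multiplication by any increasing
function of `k`, in particular by the slope of a tangent to `φ` at `k`, and convexity of `φ` turns
it into `∫ φ(k) w ≤ ∫ φ(g* / w) w`. As `f ≺ k · w`, the function `k · w` is itself a competitor and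
attains the infimum.
-/

namespace Halperin

open scoped Topology

/-- The interval `(α, β)` with real left end and extended right end; `Iset β` is `extIoo 0 β`. -/
def extIoo (α : ℝ) (β : ℝ≥0∞) : Set ℝ := {t | α < t ∧ ENNReal.ofReal t < β}

theorem isOpen_extIoo (α : ℝ) (β : ℝ≥0∞) : IsOpen (extIoo α β) :=
  isOpen_Ioi.inter (isOpen_Iio.preimage ENNReal.continuous_ofReal)

theorem nonempty_extIoo {α : ℝ} {β : ℝ≥0∞} (hα : 0 ≤ α) (h : ENNReal.ofReal α < β) :
    (extIoo α β).Nonempty := by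
  obtain ⟨d, hαd, hdβ⟩ := exists_between h
  refine ⟨d.toReal, (ENNReal.ofReal_lt_iff_lt_toReal hα hdβ.ne_top).1 hαd, ?_⟩
  rwa [ENNReal.ofReal_toReal hdβ.ne_top]

theorem measurableSet_extIoo (α : ℝ) (β : ℝ≥0∞) : MeasurableSet (extIoo α β) :=
  (isOpen_extIoo α β).measurableSet

theorem isOpen_Iset (a : ℝ≥0∞) : IsOpen (Iset a) := isOpen_extIoo 0 a

theorem measurableSet_Iset (a : ℝ≥0∞) : MeasurableSet (Iset a) :=
  measurableSet_extIoo 0 a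

theorem extIoo_ofReal {α β : ℝ} (hα : 0 ≤ α) : extIoo α (ENNReal.ofReal β) = Ioo α β :=
  ext fun _ ↦ and_congr_right fun ht ↦
    ENNReal.ofReal_lt_ofReal_iff_of_nonneg (hα.trans ht.le)

theorem extIoo_top (α : ℝ) : extIoo α ∞ = Ioi α := by
  ext; simp [extIoo]

theorem Iset_ofReal (x : ℝ) : Iset (ENNReal.ofReal x) = Ioo 0 x := extIoo_ofReal le_rfl

theorem Iset_mono {a b : ℝ≥0∞} (h : a ≤ b) : Iset a ⊆ Iset b :=
  fun _ hx ↦ ⟨hx.1, hx.2.trans_le h⟩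

theorem extIoo_subset_Iset {α : ℝ} {β : ℝ≥0∞} (hα : 0 ≤ α) : extIoo α β ⊆ Iset β :=
  fun _ ht ↦ ⟨hα.trans_lt ht.1, ht.2⟩

theorem volume_Iset (a : ℝ≥0∞) : volume (Iset a) = a := by
  induction a with
  | top => simp [show Iset ∞ = Ioi 0 from extIoo_top 0]
  | coe a => rw [← ENNReal.ofReal_coe_nnreal, Iset_ofReal, Real.volume_Ioo, sub_zero]

section Rearrangement

variable {μ : Measure ℝ} {F U H : ℝ → ℝ≥0∞} {s t : ℝ} {c : ℝ≥0∞}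

theorem rearrE_antitone (μ : Measure ℝ) (F : ℝ → ℝ≥0∞) : Antitone (rearrE μ F) :=
  fun _ _ hst ↦ sInf_le_sInf fun _ hx ↦ ⟨hx.1, hx.2.trans (ENNReal.ofReal_le_ofReal hst)⟩

theorem rearr_antitone (μ : Measure ℝ) (f : ℝ → ℝ) : Antitone (rearr μ f) :=
  rearrE_antitone μ _

theorem rearrE_le_of_forall_gt (h : ∀ d > c, μ {x | d < F x} ≤ ENNReal.ofReal t) :
    rearrE μ F t ≤ c :=
  le_of_forall_gt_imp_ge_of_dense fun d hd ↦ sInf_le ⟨pos_of_gt hd, h d hd⟩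

theorem lt_measure_of_lt_rearrE (hc : 0 < c) (h : c < rearrE μ F t) :
    ENNReal.ofReal t < μ {x | c < F x} :=
  lt_of_not_ge fun hle ↦ h.not_ge (sInf_le ⟨hc, hle⟩)

theorem rearrE_eq_zero (h : μ univ ≤ ENNReal.ofReal t) : rearrE μ F t = 0 :=
  le_zero_iff.1 <| rearrE_le_of_forall_gt fun _ _ ↦ (measure_mono (subset_univ _)).trans h

theorem rearr_eq_zero {a : ℝ≥0∞} {f : ℝ → ℝ} (h : a ≤ ENNReal.ofReal t) :
    rearr (volI a) f t = 0 :=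
  rearrE_eq_zero (by rwa [volI, Measure.restrict_apply_univ, volume_Iset])

theorem rearrE_add_le (h : F ≤ᵐ[μ] U + H) (hs : 0 ≤ s) (ht : 0 ≤ t) :
    rearrE μ F (s + t) ≤ rearrE μ U s + rearrE μ H t := by
  have superlevel_le {c d : ℝ≥0∞} :
      μ {x | c + d < F x} ≤ μ {x | c < U x} + μ {x | d < H x} := by
    refine (measure_mono_ae ?_).trans (measure_union_le _ _)
    filter_upwards [h] with x hx hlt
    by_contra hnot
    obtain ⟨hU, hH⟩ := not_or.1 hnot
    exact (lt_of_lt_of_le hlt hx).not_ge (add_le_add (not_lt.1 hU) (not_lt.1 hH))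
  unfold rearrE
  rw [ENNReal.sInf_add]
  refine le_iInf₂ fun c hc ↦ ?_
  rw [add_comm c, ENNReal.sInf_add]
  refine le_iInf₂ fun d hd ↦ sInf_le ⟨add_pos_of_pos_of_nonneg hd.1 zero_le, ?_⟩
  rw [add_comm d, ENNReal.ofReal_add hs ht]
  exact superlevel_le.trans (add_le_add hc.2 hd.2)

theorem rearr_add_le {f u h : ℝ → ℝ} (hf : ∀ᵐ x ∂μ, f x = u x + h x) (hs : 0 ≤ s)
    (ht : 0 ≤ t) : rearr μ f (s + t) ≤ rearr μ u s + rearr μ h t := by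
  refine rearrE_add_le ?_ hs ht
  filter_upwards [hf] with x hx
  rw [hx, Pi.add_apply, ← ENNReal.ofReal_add (abs_nonneg _) (abs_nonneg _)]
  exact ENNReal.ofReal_le_ofReal (abs_add_le _ _)

theorem lintegral_rearr_le {u : ℝ → ℝ} (hu : Measurable u) :
    ∫⁻ t in Ioi 0, rearr μ u t ≤ ∫⁻ x, ENNReal.ofReal |u x| ∂μ := by
  set N : ℝ → ℝ≥0∞ := fun s ↦ μ {x | s < |u x|}
  have N_meas : Measurable N :=
    Antitone.measurable fun s s' h ↦ measure_mono fun x hx ↦ lt_of_le_of_lt h hx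
  set S : Set (ℝ × ℝ) := {p | ENNReal.ofReal p.1 < N p.2}
  have hS : MeasurableSet S := measurableSet_lt
    (ENNReal.measurable_ofReal.comp measurable_fst) (N_meas.comp measurable_snd)
  have rearr_le (t : ℝ) : rearr μ u t ≤ ∫⁻ s in Ioi (0 : ℝ), S.indicator 1 (t, s) := by
    have hm : MeasurableSet {s | ENNReal.ofReal t < N s} :=
      measurableSet_lt measurable_const N_meas
    calc rearr μ u t = volume (Iset (rearr μ u t)) := (volume_Iset _).symm
      _ ≤ volume ({s | ENNReal.ofReal t < N s} ∩ Ioi 0) := by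
        refine measure_mono fun s hs ↦ ⟨?_, hs.1⟩
        simpa only [N, mem_ofPred_eq, ENNReal.ofReal_lt_ofReal_iff_of_nonneg hs.1.le] using
          lt_measure_of_lt_rearrE (ENNReal.ofReal_pos.2 hs.1) hs.2
      _ = ∫⁻ s in Ioi (0 : ℝ), S.indicator 1 (t, s) := by
        rw [← Measure.restrict_apply hm, ← lintegral_indicator_one hm]; rfl
  have lintegral_section (s : ℝ) : ∫⁻ t in Ioi (0 : ℝ), S.indicator 1 (t, s) = N s := by
    have hm : MeasurableSet {t | ENNReal.ofReal t < N s} :=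
      measurableSet_lt ENNReal.measurable_ofReal measurable_const
    calc ∫⁻ t in Ioi (0 : ℝ), S.indicator 1 (t, s)
        = volume ({t | ENNReal.ofReal t < N s} ∩ Ioi 0) := by
          rw [← Measure.restrict_apply hm, ← lintegral_indicator_one hm]; rfl
      _ = N s := by rw [inter_comm]; exact volume_Iset (N s)
  calc ∫⁻ t in Ioi 0, rearr μ u t
      ≤ ∫⁻ t in Ioi (0 : ℝ), ∫⁻ s in Ioi (0 : ℝ), S.indicator 1 (t, s) := lintegral_mono rearr_le
    _ = ∫⁻ s in Ioi (0 : ℝ), ∫⁻ t in Ioi (0 : ℝ), S.indicator 1 (t, s) :=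
        lintegral_lintegral_swap (measurable_one.indicator hS).aemeasurable
    _ = ∫⁻ s in Ioi (0 : ℝ), N s := lintegral_congr lintegral_section
    _ = ∫⁻ x, ENNReal.ofReal |u x| ∂μ := (lintegral_eq_lintegral_meas_lt μ
        (Eventually.of_forall fun x ↦ abs_nonneg (u x)) hu.abs.aemeasurable).symm

end Rearrangement

section Primitive

/-- The primitive `β ↦ ∫₀^β v`. -/
noncomputable def primitive (v : ℝ → ℝ≥0∞) (β : ℝ≥0∞) : ℝ≥0∞ := ∫⁻ s in Iset β, v s

variable {v : ℝ → ℝ≥0∞}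

theorem primitive_mono (v : ℝ → ℝ≥0∞) : Monotone (primitive v) :=
  fun _ _ h ↦ lintegral_mono_set (Iset_mono h)

theorem primitive_zero (v : ℝ → ℝ≥0∞) : primitive v 0 = 0 := by
  simp [primitive, Iset]

theorem primitive_ofReal (v : ℝ → ℝ≥0∞) (x : ℝ) :
    primitive v (ENNReal.ofReal x) = ∫⁻ s in Ioo 0 x, v s := by
  rw [primitive, Iset_ofReal]

theorem primitive_eq_add_lintegral (v : ℝ → ℝ≥0∞) {α : ℝ} {β : ℝ≥0∞} (hα : 0 ≤ α)
    (h : ENNReal.ofReal α ≤ β) :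
    primitive v β = primitive v (ENNReal.ofReal α) + ∫⁻ s in extIoo α β, v s := by
  have hdisj : Disjoint (Ioo 0 α) (extIoo α β) :=
    Set.disjoint_left.2 fun x hx hx' ↦ hx.2.not_gt hx'.1
  have hunion : (Ioo 0 α ∪ extIoo α β : Set ℝ) =ᵐ[volume] Iset β := by
    filter_upwards [Measure.ae_ne volume α] with x hx
    refine propext (Iff.intro ?_ fun hxβ ↦ ?_)
    · rintro (hx' | hx')
      · exact Iset_mono h (Iset_ofReal α ▸ hx')
      · exact extIoo_subset_Iset hα hx'
    · exact hx.lt_or_gt.imp (fun hlt ↦ ⟨hxβ.1, hlt⟩) fun hgt ↦ ⟨hgt, hxβ.2⟩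
  rw [primitive_ofReal, ← lintegral_union (measurableSet_extIoo α β) hdisj]
  exact (setLIntegral_congr hunion).symm

theorem continuousOn_primitive (hv : Measurable v) {e : ℝ≥0∞} (he : primitive v e ≠ ∞) :
    ContinuousOn (primitive v) (Iic e) := by
  have primitive_eq {β : ℝ≥0∞} (hβ : β ∈ Iic e) :
      primitive v β = ∫⁻ s in Iset e, (Iset β).indicator v s := by
    rw [lintegral_indicator (measurableSet_Iset β),
      Measure.restrict_restrict (measurableSet_Iset β), inter_eq_left.2 (Iset_mono hβ)]
    rfl
  refine ContinuousOn.congr (fun β _ ↦ ?_) fun β hβ ↦ primitive_eq hβ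
  refine tendsto_lintegral_filter_of_dominated_convergence v
    (Eventually.of_forall fun β ↦ hv.indicator (measurableSet_Iset β))
    (Eventually.of_forall fun β ↦ Eventually.of_forall fun s ↦ indicator_le_self _ v s) he ?_
  filter_upwards [ae_restrict_of_ae (Measure.ae_ne volume β.toReal),
    ae_restrict_mem (measurableSet_Iset e)] with s hs hse
  refine Tendsto.mono_left (tendsto_nhds_of_eventually_eq ?_) nhdsWithin_le_nhds
  have hsβ : ENNReal.ofReal s ≠ β := by
    rintro rfl
    exact hs (ENNReal.toReal_ofReal hse.1.le).symm
  rcases hsβ.lt_or_gt with hlt | hgt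
  · filter_upwards [lt_mem_nhds hlt] with x hx
    rw [indicator_of_mem (s := Iset x) ⟨hse.1, hx⟩, indicator_of_mem (s := Iset β) ⟨hse.1, hlt⟩]
  · filter_upwards [gt_mem_nhds hgt] with x hx
    rw [indicator_of_notMem (s := Iset x) fun h ↦ h.2.not_gt hx,
      indicator_of_notMem (s := Iset β) fun h ↦ h.2.not_gt hgt]

end Primitive

theorem tendsto_lintegral_Ioo_atTop {v : ℝ → ℝ≥0∞} (hv : Measurable v) (α : ℝ) :
    Tendsto (fun t : ℝ ↦ ∫⁻ s in Ioo α t, v s) atTop (𝓝 (∫⁻ s in extIoo α ∞, v s)) := by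
  have hcover : AECover (volume.restrict (Ioi α)) atTop fun t : ℝ ↦ Iio t :=
    aecover_Iio tendsto_id
  have h := hcover.lintegral_tendsto_of_countably_generated hv.aemeasurable.restrict
  simp only [Measure.restrict_restrict measurableSet_Iio, Iio_inter_Ioi] at h
  rwa [extIoo_top]

theorem tendsto_primitive_atTop {v : ℝ → ℝ≥0∞} (hv : Measurable v) :
    Tendsto (fun t : ℝ ↦ primitive v (ENNReal.ofReal t)) atTop (𝓝 (primitive v ∞)) := by
  simp only [primitive_ofReal]
  exact tendsto_lintegral_Ioo_atTop hv 0

theorem lintegral_extIoo_eq_sub {v : ℝ → ℝ≥0∞} {α : ℝ} {β : ℝ≥0∞} (hα : 0 ≤ α)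
    (h : ENNReal.ofReal α ≤ β) (hfin : primitive v (ENNReal.ofReal α) ≠ ∞) :
    ∫⁻ s in extIoo α β, v s = primitive v β - primitive v (ENNReal.ofReal α) := by
  rw [primitive_eq_add_lintegral v hα h, ENNReal.add_sub_cancel_left hfin]

/-- The weight `w` as a `[0, ∞]`-valued function. -/
noncomputable abbrev weight (w : ℝ → ℝ) : ℝ → ℝ≥0∞ := fun t ↦ ENNReal.ofReal (w t)

/-- Non-increasing positive weights on `(0, a)` whose primitive `W` is finite on `(0, a)`. -/
structure IsWeight (a : ℝ≥0∞) (w : ℝ → ℝ) : Prop where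
  pos : ∀ x ∈ Iset a, 0 < w x
  antitoneOn : AntitoneOn w (Iset a)
  measurable : Measurable w
  primitive_ne_top : ∀ t ∈ Iset a, primitive (weight w) (ENNReal.ofReal t) ≠ ∞

/-- Pairs of a weight `w` and a decreasing `v` whose level function is finite: the bound on
`primitive v` is the one enjoyed by `v = f*` for `f ∈ L₁ + M_W`. -/
structure IsAdmissible (a : ℝ≥0∞) (w : ℝ → ℝ) (v : ℝ → ℝ≥0∞) : Prop extends IsWeight a w where
  antitone : Antitone v
  exists_bound : ∃ K M : ℝ≥0∞, K ≠ ∞ ∧ M ≠ ∞ ∧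
    ∀ β ≤ a, primitive v β ≤ K + M * primitive (weight w) β

/-- The right ends `β ≤ a` of intervals `(0, β)` with `∫₀^β w < ∞`. Only `β = a = ∞` can fail to
be one. -/
def finiteEnds (a : ℝ≥0∞) (w : ℝ → ℝ) : Set ℝ≥0∞ := {β | β ≤ a ∧ primitive (weight w) β ≠ ∞}

variable {a : ℝ≥0∞} {w : ℝ → ℝ} {v : ℝ → ℝ≥0∞}

theorem mem_finiteEnds_of_le {β γ : ℝ≥0∞} (hβ : β ∈ finiteEnds a w) (h : γ ≤ β) :
    γ ∈ finiteEnds a w :=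
  ⟨h.trans hβ.1, ne_top_of_le_ne_top hβ.2 (primitive_mono _ h)⟩

namespace IsWeight

theorem measurable_weight (hw : IsWeight a w) : Measurable (weight w) :=
  hw.measurable.ennreal_ofReal

theorem weight_ne_zero (hw : IsWeight a w) {t : ℝ} (ht : t ∈ Iset a) : weight w t ≠ 0 :=
  (ENNReal.ofReal_pos.2 (hw.pos t ht)).ne'

theorem lintegral_weight_pos (hw : IsWeight a w) {α : ℝ} {β : ℝ≥0∞} (hα : 0 ≤ α)
    (h : ENNReal.ofReal α < β) (hβ : β ≤ a) : 0 < ∫⁻ s in extIoo α β, weight w s := by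
  have extIoo_subset_support : extIoo α β ⊆ Function.support (weight w) := fun s hs ↦
    hw.weight_ne_zero (Iset_mono hβ (extIoo_subset_Iset hα hs))
  rw [setLIntegral_pos_iff hw.measurable_weight, inter_eq_right.2 extIoo_subset_support]
  exact (isOpen_extIoo α β).measure_pos volume (nonempty_extIoo hα h)

theorem mem_finiteEnds_of_lt (hw : IsWeight a w) {β : ℝ≥0∞} (h : β < a) :
    β ∈ finiteEnds a w := by
  obtain ⟨d, hβd, hda⟩ := exists_between h
  have hd : ENNReal.ofReal d.toReal = d := ENNReal.ofReal_toReal hda.ne_top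
  have hdI : d.toReal ∈ Iset a :=
    ⟨ENNReal.toReal_pos (pos_of_gt hβd).ne' hda.ne_top, hd.trans_lt hda⟩
  have := hd ▸ hw.primitive_ne_top _ hdI
  exact mem_finiteEnds_of_le ⟨hda.le, this⟩ hβd.le

theorem eq_top_of_notMem_finiteEnds (hw : IsWeight a w) {β : ℝ≥0∞} (hβ : β ≤ a)
    (h : β ∉ finiteEnds a w) : β = ∞ ∧ a = ∞ ∧ primitive (weight w) ∞ = ∞ := by
  obtain rfl : β = a := hβ.eq_of_not_lt fun hlt ↦ h (hw.mem_finiteEnds_of_lt hlt)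
  have primitive_top : primitive (weight w) β = ∞ := not_not.1 fun hne ↦ h ⟨le_rfl, hne⟩
  suffices hβ : β = ∞ from ⟨hβ, hβ, by rwa [hβ] at primitive_top⟩
  by_contra hβ_top
  refine h ⟨le_rfl, ?_⟩
  rcases eq_or_ne β 0 with rfl | hβ_zero
  · simp [primitive_zero]
  obtain ⟨d, hd, hdβ⟩ := exists_between (pos_iff_ne_zero.2 hβ_zero)
  have ofReal_d : ENNReal.ofReal d.toReal = d := ENNReal.ofReal_toReal hdβ.ne_top
  have hdI : d.toReal ∈ Iset β :=
    ⟨ENNReal.toReal_pos hd.ne' hdβ.ne_top, ofReal_d.trans_lt hdβ⟩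
  rw [primitive_eq_add_lintegral _ ENNReal.toReal_nonneg (ofReal_d.trans_lt hdβ).le]
  refine ENNReal.add_ne_top.2 ⟨hw.primitive_ne_top _ hdI, ?_⟩
  refine ne_top_of_le_ne_top (b := weight w d.toReal * volume (Iset β)) ?_ ?_
  · exact ENNReal.mul_ne_top ENNReal.ofReal_ne_top (by rwa [volume_Iset])
  calc ∫⁻ s in extIoo d.toReal β, weight w s
      ≤ ∫⁻ _ in extIoo d.toReal β, weight w d.toReal :=
        setLIntegral_mono measurable_const fun s hs ↦ ENNReal.ofReal_le_ofReal <|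
          hw.antitoneOn hdI (extIoo_subset_Iset ENNReal.toReal_nonneg hs) hs.1.le
    _ = weight w d.toReal * volume (extIoo d.toReal β) := setLIntegral_const _ _
    _ ≤ weight w d.toReal * volume (Iset β) := by
        gcongr; exact extIoo_subset_Iset ENNReal.toReal_nonneg

theorem lintegral_weight_ne_top {α : ℝ} {β : ℝ≥0∞} (hα : 0 ≤ α) (hβ : β ∈ finiteEnds a w) :
    ∫⁻ s in extIoo α β, weight w s ≠ ∞ :=
  ne_top_of_le_ne_top hβ.2 (lintegral_mono_set (extIoo_subset_Iset hα))

end IsWeight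

theorem IsAdmissible.primitive_ne_top_of_mem (hv : IsAdmissible a w v) {β : ℝ≥0∞}
    (h : β ∈ finiteEnds a w) : primitive v β ≠ ∞ := by
  obtain ⟨K, M, hK, hM, hle⟩ := hv.exists_bound
  exact ne_top_of_le_ne_top (ENNReal.add_ne_top.2 ⟨hK, ENNReal.mul_ne_top hM h.2⟩) (hle β h.1)

section Ratio

variable {x y α β : ℝ} {z e : ℝ≥0∞}

theorem add_div_add_le_iff {A B C D : ℝ≥0∞} (hA : A ≠ ∞) (hC : C ≠ ∞) (hB : 0 < B)
    (hB' : B ≠ ∞) (hD : 0 < D) (hD' : D ≠ ∞) :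
    (A + C) / (B + D) ≤ C / D ↔ A / B ≤ (A + C) / (B + D) := by
  lift A to NNReal using hA
  lift B to NNReal using hB'
  lift C to NNReal using hC
  lift D to NNReal using hD'
  have hB : 0 < B := ENNReal.coe_pos.1 hB
  have hD : 0 < D := ENNReal.coe_pos.1 hD
  have hBD : 0 < B + D := by positivity
  rw [← ENNReal.coe_add, ← ENNReal.coe_add, ← ENNReal.coe_div hB.ne', ← ENNReal.coe_div hD.ne',
    ← ENNReal.coe_div hBD.ne', ENNReal.coe_le_coe, ENNReal.coe_le_coe, div_le_div_iff₀ hBD hD,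
    div_le_div_iff₀ hB hBD, add_mul, mul_add, mul_add, add_mul, add_le_add_iff_right,
    add_le_add_iff_left]

/-- The ratio `R(α, β)` with both integrals taken over `(α, β)`, also when `β = ∞`. -/
noncomputable def meanRatio (w : ℝ → ℝ) (v : ℝ → ℝ≥0∞) (α : ℝ) (β : ℝ≥0∞) : ℝ≥0∞ :=
  (∫⁻ s in extIoo α β, v s) / ∫⁻ s in extIoo α β, weight w s

theorem meanRatio_ofReal (hα : 0 ≤ α) : meanRatio w v α (ENNReal.ofReal β) = Rq w v α β := by
  rw [meanRatio, extIoo_ofReal hα, Rq]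

theorem RR_ofReal (hβ : 0 ≤ β) : RR w v α (ENNReal.ofReal β) = Rq w v α β := by
  rw [RR, if_neg ENNReal.ofReal_ne_top, ENNReal.toReal_ofReal hβ]

theorem RR_top : RR w v α ∞ = limsup (fun t ↦ Rq w v α t) atTop := if_pos rfl

namespace IsAdmissible

theorem continuousOn_meanRatio (hv : IsAdmissible a w v) (he : e ∈ finiteEnds a w) :
    ContinuousOn (fun p : ℝ × ℝ≥0∞ ↦ meanRatio w v p.1 p.2)
      {p | 0 ≤ p.1 ∧ ENNReal.ofReal p.1 < p.2 ∧ p.2 ≤ e} := by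
  set S : Set (ℝ × ℝ≥0∞) := {p | 0 ≤ p.1 ∧ ENNReal.ofReal p.1 < p.2 ∧ p.2 ≤ e}
  have lintegral_cont {u : ℝ → ℝ≥0∞} (hu : Measurable u) (hfin : primitive u e ≠ ∞) :
      ContinuousOn (fun p : ℝ × ℝ≥0∞ ↦ ∫⁻ s in extIoo p.1 p.2, u s) S := by
    have prim_fin (p : ℝ × ℝ≥0∞) (hp : p ∈ S) : primitive u (ENNReal.ofReal p.1) ≠ ∞ :=
      ne_top_of_le_ne_top hfin (primitive_mono u (hp.2.1.le.trans hp.2.2))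
    refine ContinuousOn.congr (fun p hp ↦ ENNReal.Tendsto.sub ?_ ?_ (Or.inr (prim_fin p hp)))
      fun p hp ↦ lintegral_extIoo_eq_sub hp.1 hp.2.1.le (prim_fin p hp)
    · exact (continuousOn_primitive hu hfin).comp continuousOn_snd (fun q hq ↦ hq.2.2) p hp
    · exact (continuousOn_primitive hu hfin).comp
        (ENNReal.continuous_ofReal.comp continuous_fst).continuousOn
        (fun q hq ↦ hq.2.1.le.trans hq.2.2) p hp
  intro p hp
  refine ENNReal.Tendsto.div
    (lintegral_cont hv.antitone.measurable (hv.primitive_ne_top_of_mem he) p hp) (Or.inr ?_)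
    (lintegral_cont hv.measurable_weight he.2 p hp) (Or.inl ?_)
  · exact (hv.lintegral_weight_pos hp.1 hp.2.1 (hp.2.2.trans he.1)).ne'
  · exact IsWeight.lintegral_weight_ne_top hp.1 (mem_finiteEnds_of_le he hp.2.2)

theorem RR_eq_meanRatio (hv : IsAdmissible a w v) (hα : 0 ≤ α) (h : ENNReal.ofReal α < z)
    (hz : z ∈ finiteEnds a w) : RR w v α z = meanRatio w v α z := by
  rcases eq_or_ne z ∞ with rfl | hz_top
  · have hmem : ∀ᶠ t : ℝ in atTop, (α, ENNReal.ofReal t) ∈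
        {p : ℝ × ℝ≥0∞ | 0 ≤ p.1 ∧ ENNReal.ofReal p.1 < p.2 ∧ p.2 ≤ ∞} := by
      filter_upwards [eventually_gt_atTop α] with t ht
      exact ⟨hα, (ENNReal.ofReal_lt_ofReal_iff (hα.trans_lt ht)).2 ht, le_top⟩
    have htendsto : Tendsto (fun t : ℝ ↦ (α, ENNReal.ofReal t)) atTop (𝓝 (α, ∞)) :=
      tendsto_const_nhds.prodMk_nhds ENNReal.tendsto_ofReal_atTop
    have := (hv.continuousOn_meanRatio hz (α, ∞) ⟨hα, h, le_rfl⟩).tendsto.comp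
      (tendsto_nhdsWithin_iff.2 ⟨htendsto, hmem⟩)
    rw [RR_top]
    exact (this.congr fun t ↦ meanRatio_ofReal hα).limsup_eq
  · rw [← ENNReal.ofReal_toReal hz_top, RR_ofReal ENNReal.toReal_nonneg, meanRatio_ofReal hα]

theorem continuousOn_RR (hv : IsAdmissible a w v) (he : e ∈ finiteEnds a w) :
    ContinuousOn (fun p : ℝ × ℝ≥0∞ ↦ RR w v p.1 p.2)
      {p | 0 ≤ p.1 ∧ ENNReal.ofReal p.1 < p.2 ∧ p.2 ≤ e} :=
  (hv.continuousOn_meanRatio he).congr fun _ hp ↦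
    hv.RR_eq_meanRatio hp.1 hp.2.1 (mem_finiteEnds_of_le he hp.2.2)

theorem RR_pos_of_le (hv : IsAdmissible a w v) (hx : 0 ≤ x) (hxy : x ≤ y)
    (hyz : ENNReal.ofReal y < z) (hz : z ∈ finiteEnds a w) (hpos : 0 < RR w v y z) :
    0 < RR w v x z := by
  have hxz := (ENNReal.ofReal_le_ofReal hxy).trans_lt hyz
  rw [hv.RR_eq_meanRatio (hx.trans hxy) hyz hz] at hpos
  rw [hv.RR_eq_meanRatio hx hxz hz]
  have hne : ∫⁻ s in extIoo y z, v s ≠ 0 := fun h0 ↦ by simp [meanRatio, h0] at hpos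
  refine ENNReal.div_pos (fun h0 ↦ hne (le_zero_iff.1 (h0 ▸ ?_)))
    (IsWeight.lintegral_weight_ne_top hx hz)
  exact lintegral_mono_set fun t ht ↦ ⟨hxy.trans_lt ht.1, ht.2⟩

theorem RR_le_RR_iff (hv : IsAdmissible a w v) (hx : 0 ≤ x) (hxy : x < y)
    (hyz : ENNReal.ofReal y < z) (hz : z ∈ finiteEnds a w) :
    RR w v x z ≤ RR w v y z ↔ Rq w v x y ≤ RR w v x z := by
  have hy := hx.trans hxy.le
  have hxy' := (ENNReal.ofReal_lt_ofReal_iff (hx.trans_lt hxy)).2 hxy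
  have hyE : ENNReal.ofReal y ∈ finiteEnds a w := mem_finiteEnds_of_le hz hyz.le
  have lintegral_add (u : ℝ → ℝ≥0∞) (hu : primitive u z ≠ ∞) : ∫⁻ s in extIoo x z, u s =
      (∫⁻ s in extIoo x (ENNReal.ofReal y), u s) + ∫⁻ s in extIoo y z, u s := by
    have hfin := ne_top_of_le_ne_top hu (primitive_mono u (hxy'.le.trans hyz.le))
    rw [← ENNReal.add_right_inj hfin, ← add_assoc,
      ← primitive_eq_add_lintegral u hx (hxy'.trans hyz).le,
      ← primitive_eq_add_lintegral u hx hxy'.le, ← primitive_eq_add_lintegral u hy hyz.le]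
  have lintegral_v_ne_top {α : ℝ} {β : ℝ≥0∞} (hα : 0 ≤ α) (hβ : β ∈ finiteEnds a w) :
      ∫⁻ s in extIoo α β, v s ≠ ∞ := ne_top_of_le_ne_top (hv.primitive_ne_top_of_mem hβ)
    (lintegral_mono_set (extIoo_subset_Iset hα))
  rw [hv.RR_eq_meanRatio hx (hxy'.trans hyz) hz, hv.RR_eq_meanRatio hy hyz hz,
    ← meanRatio_ofReal hx, meanRatio, lintegral_add v (hv.primitive_ne_top_of_mem hz),
    lintegral_add _ hz.2]
  exact add_div_add_le_iff (lintegral_v_ne_top hx hyE) (lintegral_v_ne_top hy hz)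
    (hv.lintegral_weight_pos hx hxy' hyE.1) (IsWeight.lintegral_weight_ne_top hx hyE)
    (hv.lintegral_weight_pos hy hyz hz.1) (IsWeight.lintegral_weight_ne_top hy hz)

end IsAdmissible

end Ratio

section LevelIntervals

variable {α β : ℝ} {γ : ℝ≥0∞} {c : ℝ≥0∞}

theorem ofReal_lt_ofReal {x y : ℝ} (hx : 0 ≤ x) (h : x < y) :
    ENNReal.ofReal x < ENNReal.ofReal y :=
  (ENNReal.ofReal_lt_ofReal_iff_of_nonneg hx).2 h

theorem exists_lt_Rq_of_lt_RR {T : ℝ} (h : c < RR w v α γ) (hT : 0 ≤ T)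
    (hTγ : ENNReal.ofReal T < γ) : ∃ t > T, ENNReal.ofReal t ≤ γ ∧ c < Rq w v α t := by
  rcases eq_or_ne γ ∞ with rfl | hγ
  · rw [RR_top] at h
    obtain ⟨t, hct, hTt⟩ :=
      ((frequently_lt_of_lt_limsup (by isBoundedDefault) h).and_eventually
        (eventually_gt_atTop T)).exists
    exact ⟨t, hTt, le_top, hct⟩
  · refine ⟨γ.toReal, (ENNReal.ofReal_lt_iff_lt_toReal hT hγ).1 hTγ, ?_, ?_⟩
    · rw [ENNReal.ofReal_toReal hγ]
    · rwa [← RR_ofReal ENNReal.toReal_nonneg, ENNReal.ofReal_toReal hγ]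

theorem RR_le_of_isLevelInterval (h : IsLevelInterval a w v α γ) {z : ℝ≥0∞}
    (hαz : ENNReal.ofReal α < z) (hz : z ≤ γ) : RR w v α z ≤ RR w v α γ := by
  rcases hz.eq_or_lt with rfl | hlt
  · exact le_rfl
  rw [← ENNReal.ofReal_toReal hlt.ne_top, RR_ofReal ENNReal.toReal_nonneg]
  exact h.2.2.2.2 _ ((ENNReal.ofReal_lt_iff_lt_toReal h.1 hlt.ne_top).1 hαz)
    (by rwa [ENNReal.ofReal_toReal hlt.ne_top])

theorem lintegral_Ioo_le_primitive (u : ℝ → ℝ≥0∞) {x : ℝ} (hx : 0 ≤ x) (t : ℝ) :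
    ∫⁻ s in Ioo x t, u s ≤ primitive u (ENNReal.ofReal t) := by
  rw [primitive_ofReal]
  exact lintegral_mono_set (Ioo_subset_Ioo_left hx)

theorem primitive_le_add_lintegral (u : ℝ → ℝ≥0∞) {x M t : ℝ} (hx : x ∈ Icc 0 M) (h : M ≤ t) :
    primitive u (ENNReal.ofReal t) ≤
      primitive u (ENNReal.ofReal M) + ∫⁻ s in Ioo x t, u s := by
  rw [primitive_eq_add_lintegral u hx.1 (ENNReal.ofReal_le_ofReal (hx.2.trans h)),
    extIoo_ofReal hx.1]
  gcongr
  exact primitive_mono u (ENNReal.ofReal_le_ofReal hx.2)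

theorem IsWeight.ofReal_mem_finiteEnds (hw : IsWeight a w) {t : ℝ} (h : ENNReal.ofReal t ≤ a) :
    ENNReal.ofReal t ∈ finiteEnds a w :=
  of_not_not fun hmem ↦ ENNReal.ofReal_ne_top (hw.eq_top_of_notMem_finiteEnds h hmem).1

namespace IsAdmissible

theorem exists_isLevelInterval_right (hv : IsAdmissible a w v) {β₁ β₂ : ℝ≥0∞} (hα : 0 ≤ α)
    (h₁ : ENNReal.ofReal α < β₁) (h₂ : β₁ < β₂) (hβ₂ : β₂ ∈ finiteEnds a w) (hc : 0 < c)
    (hle : ∀ s, ENNReal.ofReal α < s → s ≤ β₁ → RR w v α s ≤ c) (hge : c ≤ RR w v α β₂) :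
    ∃ β' > β₁, IsLevelInterval a w v α β' := by
  suffices ∃ m ∈ Ioc β₁ β₂, c ≤ RR w v α m ∧
      ∀ s, ENNReal.ofReal α < s → s ≤ β₂ → RR w v α s ≤ RR w v α m by
    obtain ⟨m, hm, hcm, hmax⟩ := this
    have hαm := h₁.trans hm.1
    refine ⟨m, hm.1, hα, hαm, hm.2.trans hβ₂.1, hc.trans_le hcm, fun t hαt htm ↦ ?_⟩
    rw [← RR_ofReal (hα.trans hαt.le)]
    exact hmax _ (ofReal_lt_ofReal hα hαt) (htm.le.trans hm.2)
  have hcont : ContinuousOn (fun s ↦ RR w v α s) (Icc β₁ β₂) :=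
    (hv.continuousOn_RR hβ₂).comp (f := fun s ↦ (α, s)) (by fun_prop)
      fun s hs ↦ ⟨hα, h₁.trans_le hs.1, hs.2⟩
  obtain ⟨m, hm, hmax⟩ := isCompact_Icc.exists_isMaxOn (nonempty_Icc.2 h₂.le) hcont
  have hcm : c ≤ RR w v α m := hge.trans (hmax (right_mem_Icc.2 h₂.le))
  have hmax' (s : ℝ≥0∞) (hαs : ENNReal.ofReal α < s) (hs : s ≤ β₂) :
      RR w v α s ≤ RR w v α m :=
    (le_total s β₁).elim (fun h ↦ (hle s hαs h).trans hcm) fun h ↦ hmax ⟨h, hs⟩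
  rcases hm.1.eq_or_lt with rfl | hlt
  · have hmc : RR w v α β₁ ≤ c := hle _ h₁ le_rfl
    exact ⟨β₂, ⟨h₂, le_rfl⟩, hge, fun s hαs hs ↦ (hmax' s hαs hs).trans (hmc.trans hge)⟩
  · exact ⟨m, ⟨hlt, hm.2⟩, hcm, hmax'⟩

theorem exists_isLevelInterval_left (hv : IsAdmissible a w v) {α₁ α₂ : ℝ} (hα₂ : 0 ≤ α₂)
    (h₁ : α₂ < α₁) (h₂ : ENNReal.ofReal α₁ < γ) (hγ : γ ∈ finiteEnds a w) (hc : 0 < c)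
    (hge : ∀ s, α₁ ≤ s → ENNReal.ofReal s < γ → c ≤ RR w v s γ) (hle : RR w v α₂ γ ≤ c) :
    ∃ α' < α₁, IsLevelInterval a w v α' γ := by
  suffices ∃ m ∈ Ico α₂ α₁,
      ∀ s, α₂ ≤ s → ENNReal.ofReal s < γ → RR w v m γ ≤ RR w v s γ by
    obtain ⟨m, hm, hmin⟩ := this
    have hm_nonneg : 0 ≤ m := hα₂.trans hm.1
    have hmγ := (ofReal_lt_ofReal hm_nonneg hm.2).trans h₂
    refine ⟨m, hm.2, hm_nonneg, hmγ, hγ.1, ?_, fun t hmt htγ ↦ ?_⟩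
    · exact hv.RR_pos_of_le hm_nonneg hm.2.le h₂ hγ (hc.trans_le (hge α₁ le_rfl h₂))
    · exact (hv.RR_le_RR_iff hm_nonneg hmt htγ hγ).1 (hmin t (hm.1.trans hmt.le) htγ)
  have hcont : ContinuousOn (fun s ↦ RR w v s γ) (Icc α₂ α₁) :=
    (hv.continuousOn_RR hγ).comp (f := fun s ↦ (s, γ)) (by fun_prop) fun s hs ↦
      ⟨hα₂.trans hs.1, (ENNReal.ofReal_le_ofReal hs.2).trans_lt h₂, le_rfl⟩
  obtain ⟨m, hm, hmin⟩ := isCompact_Icc.exists_isMinOn (nonempty_Icc.2 h₁.le) hcont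
  have hmc : RR w v m γ ≤ c := le_trans (hmin (left_mem_Icc.2 h₁.le)) hle
  have hmin' (s : ℝ) (hs : α₂ ≤ s) (hsγ : ENNReal.ofReal s < γ) : RR w v m γ ≤ RR w v s γ :=
    (le_total s α₁).elim (fun h ↦ hmin ⟨hs, h⟩) fun h ↦ hmc.trans (hge s h hsγ)
  rcases hm.2.eq_or_lt with rfl | hlt
  · have hcm : c ≤ RR w v m γ := hge _ le_rfl h₂
    exact ⟨α₂, ⟨le_rfl, h₁⟩, fun s hs hsγ ↦ (hle.trans hcm).trans (hmin' s hs hsγ)⟩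
  · exact ⟨m, ⟨hm.1, hlt⟩, hmin'⟩

theorem eventually_lt_Rq_of_lt_Rq (hv : IsAdmissible ∞ w v) (hW : primitive (weight w) ∞ = ∞)
    {c c' : ℝ≥0∞} (hc : c < c') (hc' : c' ≠ ∞) (M : ℝ) :
    ∀ᶠ t : ℝ in atTop, ∀ α ∈ Icc 0 M, ∀ α' ∈ Icc 0 M, c' < Rq w v α t → c < Rq w v α' t := by
  have mem_finite (t : ℝ) : ENNReal.ofReal t ∈ finiteEnds ∞ w :=
    hv.mem_finiteEnds_of_lt ENNReal.ofReal_lt_top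
  obtain ⟨δ, hδ, rfl⟩ : ∃ δ, 0 < δ ∧ c' = c + δ :=
    ⟨c' - c, tsub_pos_of_lt hc, (add_tsub_cancel_of_le hc.le).symm⟩
  have htendsto : Tendsto (fun t ↦ δ * primitive (weight w) (ENNReal.ofReal t)) atTop (𝓝 ∞) := by
    simpa only [hW, ENNReal.mul_top hδ.ne'] using ENNReal.Tendsto.const_mul (a := δ)
      (tendsto_primitive_atTop hv.measurable_weight) (Or.inl (by simp [hW]))
  set V : ℝ → ℝ≥0∞ := fun t ↦ primitive v (ENNReal.ofReal t)
  set W : ℝ → ℝ≥0∞ := fun t ↦ primitive (weight w) (ENNReal.ofReal t)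
  set C : ℝ≥0∞ := (c + δ) * W M + V M
  have hC : C ≠ ∞ := ENNReal.add_ne_top.2
    ⟨ENNReal.mul_ne_top hc' (mem_finite M).2, hv.primitive_ne_top_of_mem (mem_finite M)⟩
  filter_upwards [htendsto.eventually (lt_mem_nhds hC.lt_top), eventually_gt_atTop M]
    with t ht hMt α hα α' hα' hlt
  have hWα : (c + δ) * ∫⁻ s in Ioo α t, weight w s ≤ ∫⁻ s in Ioo α t, v s :=
    ENNReal.mul_le_of_le_div hlt.le
  have hlt_add : C + c * W t < C + ∫⁻ s in Ioo α' t, v s := by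
    calc C + c * W t < δ * W t + c * W t :=
          ENNReal.add_lt_add_right (ENNReal.mul_ne_top (ne_top_of_le_ne_top hc' le_self_add)
            (mem_finite t).2) ht
      _ = (c + δ) * W t := by ring
      _ ≤ (c + δ) * (W M + ∫⁻ s in Ioo α t, weight w s) := by
          gcongr; exact primitive_le_add_lintegral _ hα hMt.le
      _ ≤ (c + δ) * W M + V t := by
          rw [mul_add]; gcongr; exact hWα.trans (lintegral_Ioo_le_primitive v hα.1 t)
      _ ≤ (c + δ) * W M + (V M + ∫⁻ s in Ioo α' t, v s) := by
          gcongr; exact primitive_le_add_lintegral v hα' hMt.le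
      _ = C + ∫⁻ s in Ioo α' t, v s := (add_assoc _ _ _).symm
  have hWα'_pos := hv.lintegral_weight_pos hα'.1
    (ofReal_lt_ofReal hα'.1 (hα'.2.trans_lt hMt)) le_top
  have hWα'_fin := IsWeight.lintegral_weight_ne_top hα'.1 (mem_finite t)
  rw [extIoo_ofReal hα'.1] at hWα'_pos hWα'_fin
  refine (ENNReal.lt_div_iff_mul_lt (Or.inl hWα'_pos.ne') (Or.inl hWα'_fin)).2 ?_
  refine lt_of_le_of_lt ?_ ((ENNReal.add_lt_add_iff_left hC).1 hlt_add)
  gcongr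
  exact lintegral_Ioo_le_primitive _ hα'.1 t

theorem RR_top_le_RR_top (hv : IsAdmissible ∞ w v) (hW : primitive (weight w) ∞ = ∞) {α α' : ℝ}
    (hα : 0 ≤ α) (hα' : 0 ≤ α') : RR w v α ∞ ≤ RR w v α' ∞ := by
  refine le_of_forall_lt_imp_le_of_dense fun c hc ↦ ?_
  obtain ⟨c', hcc', hc'⟩ := exists_between hc
  rw [RR_top] at hc' ⊢
  refine le_limsup_of_frequently_le ?_ (by isBoundedDefault)
  refine ((frequently_lt_of_lt_limsup (by isBoundedDefault) hc').and_eventually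
    (hv.eventually_lt_Rq_of_lt_Rq hW hcc' hc'.ne_top (max α α'))).mono ?_
  rintro t ⟨hlt, himp⟩
  exact (himp α ⟨hα, le_max_left _ _⟩ α' ⟨hα', le_max_right _ _⟩ hlt).le

theorem RR_lt_of_isMaxLevelInterval (hv : IsAdmissible a w v) {γ' : ℝ≥0∞}
    (hmax : IsMaxLevelInterval a w v α γ) (hγ : γ < γ') (hγ' : γ' ≤ a) :
    RR w v α γ' < RR w v α γ := by
  obtain ⟨hlevel, hmax⟩ := hmax
  obtain ⟨hα, hαγ, hγa, hpos, -⟩ := id hlevel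
  have RR_lt_of_mem {s : ℝ≥0∞} (hs : γ < s) (hsE : s ∈ finiteEnds a w) :
      RR w v α s < RR w v α γ := by
    by_contra! hge
    obtain ⟨s', hγs', hs'⟩ := hv.exists_isLevelInterval_right hα hαγ hs hsE hpos
      (fun _ ↦ RR_le_of_isLevelInterval hlevel) hge
    exact hγs'.ne' (hmax _ _ hs' le_rfl hγs'.le).2
  by_cases hγ'E : γ' ∈ finiteEnds a w
  · exact RR_lt_of_mem hγ hγ'E
  obtain ⟨rfl, rfl, -⟩ := hv.eq_top_of_notMem_finiteEnds hγ' hγ'E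
  by_contra! hge
  refine hγ.ne' (hmax α ∞ ⟨hα, ENNReal.ofReal_lt_top, le_rfl, hpos.trans_le hge, ?_⟩ le_rfl
    hγ.le).2
  intro t hαt _
  rw [← RR_ofReal (hα.trans hαt.le)]
  refine le_trans ?_ hge
  rcases le_or_gt (ENNReal.ofReal t) γ with h | h
  · exact RR_le_of_isLevelInterval hlevel (ofReal_lt_ofReal hα hαt) h
  · exact (RR_lt_of_mem h (hv.mem_finiteEnds_of_lt ENNReal.ofReal_lt_top)).le

theorem RR_le_of_isMaxLevelInterval (hv : IsAdmissible a w v) {α' : ℝ}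
    (hmax : IsMaxLevelInterval a w v α γ) (hα' : 0 ≤ α') (hα'γ : ENNReal.ofReal α' < γ) :
    RR w v α γ ≤ RR w v α' γ := by
  obtain ⟨⟨hα, hαγ, hγa, hpos, hlevel⟩, hmax⟩ := hmax
  by_cases hγE : γ ∈ finiteEnds a w
  · have RR_le (s : ℝ) (hs : α ≤ s) (hsγ : ENNReal.ofReal s < γ) : RR w v α γ ≤ RR w v s γ := by
      rcases hs.eq_or_lt with rfl | hlt
      · exact le_rfl
      · exact (hv.RR_le_RR_iff hα hlt hsγ hγE).2 (hlevel s hlt hsγ)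
    rcases le_or_gt α α' with h | h
    · exact RR_le α' h hα'γ
    by_contra! hlt
    obtain ⟨α'', hα'', hlev⟩ := hv.exists_isLevelInterval_left hα' h hαγ hγE hpos RR_le hlt.le
    exact hα''.ne (hmax _ _ hlev hα''.le le_rfl).1
  · obtain ⟨rfl, rfl, hW⟩ := hv.eq_top_of_notMem_finiteEnds hγa hγE
    exact hv.RR_top_le_RR_top hW hα hα'

end IsAdmissible

end LevelIntervals

section MaximalLevelIntervals

namespace IsAdmissible

variable {ι : Type*} {l : Filter ι} {u : ι → ℝ} {b : ι → ℝ≥0∞} {x s : ℝ} {y : ℝ≥0∞}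

theorem tendsto_Rq (hv : IsAdmissible a w v) (hx : 0 ≤ x) (hxs : x < s)
    (hs : ENNReal.ofReal s ≤ a) (hxu : ∀ i, x ≤ u i) (hu : Tendsto u l (𝓝 x)) :
    Tendsto (fun i ↦ Rq w v (u i) s) l (𝓝 (Rq w v x s)) := by
  have hs_nonneg : 0 ≤ s := hx.trans hxs.le
  have hcont := hv.continuousOn_RR (hv.ofReal_mem_finiteEnds hs) (x, ENNReal.ofReal s)
    ⟨hx, ofReal_lt_ofReal hx hxs, le_rfl⟩
  have := hcont.tendsto.comp (f := fun i ↦ (u i, ENNReal.ofReal s)) <| tendsto_nhdsWithin_iff.2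
    ⟨hu.prodMk_nhds tendsto_const_nhds, (hu.eventually (gt_mem_nhds hxs)).mono fun i hi ↦
      ⟨hx.trans (hxu i), ofReal_lt_ofReal (hx.trans (hxu i)) hi, le_rfl⟩⟩
  rw [RR_ofReal hs_nonneg] at this
  exact this.congr fun i ↦ RR_ofReal hs_nonneg

theorem Rq_le_RR_top_of_tendsto [l.NeBot] (hv : IsAdmissible ∞ w v)
    (hW : primitive (weight w) ∞ = ∞) (hlevel : ∀ i, IsLevelInterval ∞ w v (u i) (b i))
    (hx : 0 ≤ x) (hxs : x < s) (hxu : ∀ i, x ≤ u i) (hu : Tendsto u l (𝓝 x))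
    (hb : Tendsto b l (𝓝 ∞)) : Rq w v x s ≤ RR w v x ∞ := by
  have hs := hx.trans hxs.le
  refine le_of_forall_lt_imp_le_of_dense fun c hc ↦ ?_
  obtain ⟨c', hcc', hc'⟩ := exists_between hc
  rw [RR_top]
  refine le_limsup_of_frequently_le (frequently_atTop.2 fun N ↦ ?_) (by isBoundedDefault)
  obtain ⟨T, hT⟩ := eventually_atTop.1
    (hv.eventually_lt_Rq_of_lt_Rq hW hcc' hc'.ne_top s)
  obtain ⟨i, hui, hc'i, hbi⟩ := ((hu.eventually (gt_mem_nhds hxs)).and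
    (((hv.tendsto_Rq hx hxs le_top hxu hu).eventually (lt_mem_nhds hc')).and
      (hb.eventually (lt_mem_nhds (ENNReal.ofReal_lt_top (r := max s (max N T))))))).exists
  have hsb : ENNReal.ofReal s < b i :=
    (ENNReal.ofReal_le_ofReal (le_max_left _ _)).trans_lt hbi
  obtain ⟨t, ht, -, hc't⟩ := exists_lt_Rq_of_lt_RR
    (hc'i.trans_le ((hlevel i).2.2.2.2 s hui hsb)) (hs.trans (le_max_left _ _)) hbi
  obtain ⟨-, hNt, hTt⟩ : s < t ∧ N < t ∧ T < t := by simpa only [gt_iff_lt, max_lt_iff] using ht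
  exact ⟨t, hNt.le, (hT t hTt.le (u i) ⟨(hlevel i).1, hui.le⟩ x ⟨hx, hxs.le⟩ hc't).le⟩

theorem Rq_le_RR_of_tendsto [l.NeBot] (hv : IsAdmissible a w v)
    (hlevel : ∀ i, IsLevelInterval a w v (u i) (b i)) (hx : 0 ≤ x) (hxs : x < s)
    (hsy : ENNReal.ofReal s < y) (hy : y ≤ a) (hxu : ∀ i, x ≤ u i) (hby : ∀ i, b i ≤ y)
    (hu : Tendsto u l (𝓝 x)) (hb : Tendsto b l (𝓝 y)) : Rq w v x s ≤ RR w v x y := by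
  by_cases hyE : y ∈ finiteEnds a w
  · have hcont := hv.continuousOn_RR hyE (x, y)
      ⟨hx, (ofReal_lt_ofReal hx hxs).trans hsy, le_rfl⟩
    have hRR := hcont.tendsto.comp (f := fun i ↦ (u i, b i)) <| tendsto_nhdsWithin_iff.2
      ⟨hu.prodMk_nhds hb, .of_forall fun i ↦ ⟨(hlevel i).1, (hlevel i).2.1, hby i⟩⟩
    refine le_of_tendsto_of_tendsto (hv.tendsto_Rq hx hxs (hsy.le.trans hy) hxu hu) hRR ?_
    filter_upwards [hu.eventually (gt_mem_nhds hxs), hb.eventually (lt_mem_nhds hsy)] with i hui hbi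
    exact (hlevel i).2.2.2.2 s hui hbi
  · obtain ⟨rfl, rfl, hW⟩ := hv.eq_top_of_notMem_finiteEnds hy hyE
    exact hv.Rq_le_RR_top_of_tendsto hW hlevel hx hxs hxu hu hb

theorem isLevelInterval_of_tendsto [l.NeBot] (hv : IsAdmissible a w v)
    (hlevel : ∀ i, IsLevelInterval a w v (u i) (b i)) (hx : 0 ≤ x) (hy : y ≤ a)
    (hxu : ∀ i, x ≤ u i) (hby : ∀ i, b i ≤ y) (hu : Tendsto u l (𝓝 x))
    (hb : Tendsto b l (𝓝 y)) : IsLevelInterval a w v x y := by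
  have Rq_le (s : ℝ) (hxs : x < s) (hsy : ENNReal.ofReal s < y) : Rq w v x s ≤ RR w v x y :=
    hv.Rq_le_RR_of_tendsto hlevel hx hxs hsy hy hxu hby hu hb
  obtain ⟨i⟩ := l.nonempty_of_neBot
  obtain ⟨hui, hub, -, hpos, -⟩ := hlevel i
  obtain ⟨t, hut, htb, ht⟩ := exists_lt_Rq_of_lt_RR hpos hui hub
  have ht_nonneg : 0 ≤ t := hui.trans hut.le
  have hty : ENNReal.ofReal t ≤ y := htb.trans (hby i)
  rw [← RR_ofReal ht_nonneg] at ht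
  have hRq_pos := hv.RR_pos_of_le hx (hxu i) (ofReal_lt_ofReal hui hut)
    (hv.ofReal_mem_finiteEnds (hty.trans hy)) ht
  refine ⟨hx, ((ENNReal.ofReal_le_ofReal (hxu i)).trans_lt hub).trans_le (hby i), hy, ?_, Rq_le⟩
  rcases hty.eq_or_lt with rfl | hlt
  · exact hRq_pos
  · rw [RR_ofReal ht_nonneg] at hRq_pos
    exact hRq_pos.trans_le (Rq_le t ((hxu i).trans_lt hut) hlt)

theorem exists_isMaxLevelInterval (hv : IsAdmissible a w v) {α : ℝ} {β : ℝ≥0∞}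
    (h : IsLevelInterval a w v α β) :
    ∃ α' β', IsMaxLevelInterval a w v α' β' ∧ α' ≤ α ∧ β ≤ β' := by
  let S : Set (ℝᵒᵈ × ℝ≥0∞) := {p | IsLevelInterval a w v (OrderDual.ofDual p.1) p.2}
  have chain_bddAbove : ∀ c ⊆ S, IsChain (· ≤ ·) c → ∀ p ∈ c, ∃ ub ∈ S, ∀ z ∈ c, z ≤ ub := by
    intro c hc hchain p hp
    have : Nonempty c := ⟨⟨p, hp⟩⟩
    have : IsDirectedOrder c := hchain.directedOn.isDirectedOrder
    have hbdd : BddBelow (range fun p : c ↦ OrderDual.ofDual p.1.1) :=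
      ⟨0, by rintro _ ⟨p, rfl⟩; exact (hc p.2).1⟩
    refine ⟨(OrderDual.toDual (⨅ p : c, OrderDual.ofDual p.1.1), ⨆ p : c, p.1.2), ?_,
      fun z hz ↦ ⟨ciInf_le hbdd ⟨z, hz⟩, le_iSup (fun p : c ↦ p.1.2) ⟨z, hz⟩⟩⟩
    exact hv.isLevelInterval_of_tendsto (fun p : c ↦ hc p.2) (le_ciInf fun p ↦ (hc p.2).1)
      (iSup_le fun p ↦ (hc p.2).2.2.1) (ciInf_le hbdd) (le_iSup fun p : c ↦ p.1.2)
      (tendsto_atTop_ciInf (fun p q (hpq : p.1 ≤ q.1) ↦ hpq.1) hbdd)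
      (tendsto_atTop_iSup fun p q (hpq : p.1 ≤ q.1) ↦ hpq.2)
  obtain ⟨m, hle, hm, hmax⟩ := zorn_le_nonempty₀ S chain_bddAbove (OrderDual.toDual α, β) h
  refine ⟨OrderDual.ofDual m.1, m.2, ⟨hm, fun α' β' h' hα hβ ↦ ?_⟩, hle.1, hle.2⟩
  have := hmax (y := (OrderDual.toDual α', β')) h' ⟨hα, hβ⟩
  exact ⟨le_antisymm hα this.1, le_antisymm this.2 hβ⟩

end IsAdmissible

end MaximalLevelIntervals

section LevelDensity

/-- The candidate for `f⁰ / w`, given by the min-max formula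
`k(t) = inf_{0 ≤ α < t} sup_{t < β ≤ a} R(α, β)`. -/
noncomputable def levelDensity (a : ℝ≥0∞) (w : ℝ → ℝ) (v : ℝ → ℝ≥0∞) (t : ℝ) : ℝ≥0∞ :=
  ⨅ (α : ℝ) (_ : 0 ≤ α ∧ α < t), ⨆ (β : ℝ≥0∞) (_ : ENNReal.ofReal t < β ∧ β ≤ a), RR w v α β

theorem levelDensity_antitone : Antitone (levelDensity a w v) := fun _ _ hst ↦
  le_iInf₂ fun α hα ↦ (iInf₂_le α ⟨hα.1, hα.2.trans_le hst⟩).trans <| iSup₂_le fun β hβ ↦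
    le_iSup₂_of_le β ⟨(ENNReal.ofReal_le_ofReal hst).trans_lt hβ.1, hβ.2⟩ le_rfl

variable {α t : ℝ} {β : ℝ≥0∞} {c : ℝ≥0∞}

theorem exists_lt_Rq_of_lt_levelDensity (h : c < levelDensity a w v t) (hα : 0 ≤ α) (hαt : α < t) :
    ∃ s > t, ENNReal.ofReal s ≤ a ∧ c < Rq w v α s := by
  have h' := h.trans_le (iInf₂_le α ⟨hα, hαt⟩)
  simp only [lt_iSup_iff] at h'
  obtain ⟨β, ⟨htβ, hβ⟩, hc⟩ := h'
  obtain ⟨s, hts, hsβ, hs⟩ := exists_lt_Rq_of_lt_RR hc (hα.trans hαt.le) htβ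
  exact ⟨s, hts, hsβ.trans hβ, hs⟩

theorem Rq_le_of_forall_le {x y : ℝ} (hw : Measurable (weight w))
    (h : ∀ s ∈ Ioo x y, v s ≤ c * weight w s) : Rq w v x y ≤ c := by
  refine ENNReal.div_le_of_le_mul ?_
  rw [← lintegral_const_mul _ hw]
  exact setLIntegral_mono (hw.const_mul c) h

theorem IsAdmissible.le_Rq_of_forall_le (hv : IsAdmissible a w v) {x y : ℝ} (hx : 0 ≤ x)
    (hxy : x < y) (hy : ENNReal.ofReal y ≤ a) (h : ∀ s ∈ Ioo x y, c * weight w s ≤ v s) :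
    c ≤ Rq w v x y := by
  have hpos := hv.lintegral_weight_pos hx (ofReal_lt_ofReal hx hxy) hy
  have hfin := IsWeight.lintegral_weight_ne_top hx (hv.ofReal_mem_finiteEnds hy)
  rw [extIoo_ofReal hx] at hpos hfin
  rw [Rq, ENNReal.le_div_iff_mul_le (Or.inl hpos.ne') (Or.inl hfin),
    ← lintegral_const_mul _ hv.measurable_weight]
  exact setLIntegral_mono hv.antitone.measurable h

namespace IsAdmissible

theorem levelDensity_of_isMaxLevelInterval (hv : IsAdmissible a w v)
    (hmax : IsMaxLevelInterval a w v α β) (hαt : α < t) (htβ : ENNReal.ofReal t < β) :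
    levelDensity a w v t = RR w v α β := by
  obtain ⟨hα, -, hβ, -, hlevel⟩ := hmax.1
  apply le_antisymm
  · refine le_of_forall_lt_imp_le_of_dense fun c hc ↦ ?_
    obtain ⟨s, hts, hsa, hcs⟩ := exists_lt_Rq_of_lt_levelDensity hc hα hαt
    refine hcs.le.trans ?_
    rw [← RR_ofReal (hα.trans (hαt.trans hts).le)]
    rcases lt_trichotomy (ENNReal.ofReal s) β with h | rfl | h
    · rw [RR_ofReal (hα.trans (hαt.trans hts).le)]
      exact hlevel s (hαt.trans hts) h
    · exact le_rfl
    · exact (hv.RR_lt_of_isMaxLevelInterval hmax h hsa).le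
  · exact le_iInf₂ fun γ hγ ↦ (hv.RR_le_of_isMaxLevelInterval hmax hγ.1
      ((ENNReal.ofReal_le_ofReal hγ.2.le).trans_lt htβ)).trans
        (le_iSup₂_of_le β ⟨htβ, hβ⟩ le_rfl)

theorem isMaxLevelInterval_unique (hv : IsAdmissible a w v) {α' : ℝ} {β' : ℝ≥0∞}
    (hmax : IsMaxLevelInterval a w v α β) (hmax' : IsMaxLevelInterval a w v α' β')
    (hαt : α < t) (htβ : ENNReal.ofReal t < β) (hα't : α' < t) (htβ' : ENNReal.ofReal t < β') :
    α = α' ∧ β = β' := by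
  have right_le {α₁ α₂ : ℝ} {β₁ β₂ : ℝ≥0∞} (h₁ : IsMaxLevelInterval a w v α₁ β₁)
      (h₂ : IsMaxLevelInterval a w v α₂ β₂) (hα₁ : α₁ < t) (hβ₁ : ENNReal.ofReal t < β₁)
      (hα₂ : α₂ < t) (hβ₂ : ENNReal.ofReal t < β₂) : β₂ ≤ β₁ := by
    by_contra! hlt
    have RR_lt := hv.RR_lt_of_isMaxLevelInterval h₁ hlt h₂.1.2.2.1
    have RR_le := hv.RR_le_of_isMaxLevelInterval h₂ h₁.1.1
      ((ENNReal.ofReal_le_ofReal hα₁.le).trans_lt hβ₂)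
    rw [← hv.levelDensity_of_isMaxLevelInterval h₂ hα₂ hβ₂,
      hv.levelDensity_of_isMaxLevelInterval h₁ hα₁ hβ₁] at RR_le
    exact RR_lt.not_ge RR_le
  obtain rfl : β = β' := le_antisymm (right_le hmax' hmax hα't htβ' hαt htβ)
    (right_le hmax hmax' hαt htβ hα't htβ')
  rcases le_total α α' with h | h
  · exact ⟨(hmax'.2 _ _ hmax.1 h le_rfl).1, rfl⟩
  · exact ⟨(hmax.2 _ _ hmax'.1 h le_rfl).1.symm, rfl⟩

theorem continuousAt_div_weight (hv : IsAdmissible a w v) (ht : t ∈ Iset a)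
    (hwt : ContinuousAt w t) (hvt : ContinuousAt v t) :
    ContinuousAt (fun s ↦ v s / weight w s) t :=
  ENNReal.Tendsto.div hvt (Or.inr (hv.weight_ne_zero ht))
    ((ENNReal.continuous_ofReal.tendsto _).comp hwt) (Or.inl ENNReal.ofReal_ne_top)

theorem levelDensity_le_div_weight (hv : IsAdmissible a w v) (ht : t ∈ Iset a)
    (hcont : ContinuousAt (fun s ↦ v s / weight w s) t)
    (hno : ∀ α β, IsLevelInterval a w v α β → α < t → β ≤ ENNReal.ofReal t) :
    levelDensity a w v t ≤ v t / weight w t := by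
  by_contra! hlt
  obtain ⟨c, hc, hck⟩ := exists_between hlt
  obtain ⟨p, q, ⟨hpt, htq⟩, hpq⟩ := mem_nhds_iff_exists_Ioo_subset.1
    (inter_mem ((isOpen_Iset a).mem_nhds ht) (hcont.eventually (gt_mem_nhds hc)))
  obtain ⟨α, hpα, hαt⟩ := exists_between hpt
  have hα : 0 ≤ α := (hpq ⟨hpα, hαt.trans htq⟩).1.1.le
  have v_le (s : ℝ) (hs : s ∈ Ioo α t) : v s ≤ c * weight w s := by
    obtain ⟨hsI, hs'⟩ := hpq ⟨hpα.trans hs.1, hs.2.trans htq⟩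
    exact (ENNReal.div_le_iff (hv.weight_ne_zero hsI) ENNReal.ofReal_ne_top).1 (le_of_lt hs')
  have RR_le (r : ℝ≥0∞) (hrt : r ≤ ENNReal.ofReal t) : RR w v α r ≤ c := by
    rw [← ENNReal.ofReal_toReal (ne_top_of_le_ne_top ENNReal.ofReal_ne_top hrt),
      RR_ofReal ENNReal.toReal_nonneg]
    exact Rq_le_of_forall_le hv.measurable_weight fun s hs ↦
      v_le s ⟨hs.1, hs.2.trans_le (ENNReal.toReal_le_of_le_ofReal ht.1.le hrt)⟩
  obtain ⟨s, hts, hsa, hcs⟩ := exists_lt_Rq_of_lt_levelDensity hck hα hαt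
  rw [← RR_ofReal (ht.1.trans hts).le] at hcs
  obtain ⟨β', hβ', hlevel⟩ := hv.exists_isLevelInterval_right hα (ofReal_lt_ofReal hα hαt)
    (ofReal_lt_ofReal ht.1.le hts) (hv.ofReal_mem_finiteEnds hsa) (pos_of_gt hc)
    (fun r _ ↦ RR_le r) hcs.le
  exact (hno α β' hlevel hαt).not_gt hβ'

theorem div_weight_le_levelDensity (hv : IsAdmissible a w v) (ht : t ∈ Iset a)
    (hcont : ContinuousAt (fun s ↦ v s / weight w s) t)
    (hno : ∀ α β, IsLevelInterval a w v α β → α < t → β ≤ ENNReal.ofReal t) :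
    v t / weight w t ≤ levelDensity a w v t := by
  by_contra! hlt
  obtain ⟨c, hkc, hc⟩ := exists_between hlt
  obtain ⟨p, q, ⟨hpt, htq⟩, hpq⟩ := mem_nhds_iff_exists_Ioo_subset.1
    (inter_mem ((isOpen_Iset a).mem_nhds ht) (hcont.eventually (lt_mem_nhds hc)))
  obtain ⟨s, hts, hsq⟩ := exists_between htq
  have hs : 0 ≤ s := (ht.1.trans hts).le
  have hsa : ENNReal.ofReal s ≤ a := (hpq ⟨hpt.trans hts, hsq⟩).1.2.le
  have hts' := ofReal_lt_ofReal ht.1.le hts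
  have le_RR (r : ℝ) (htr : t ≤ r) (hrs : ENNReal.ofReal r < ENNReal.ofReal s) :
      c ≤ RR w v r (ENNReal.ofReal s) := by
    rw [RR_ofReal hs]
    exact hv.le_Rq_of_forall_le (ht.1.le.trans htr)
      ((ENNReal.ofReal_lt_ofReal_iff (ht.1.trans hts)).1 hrs) hsa fun x hx ↦
        ENNReal.mul_le_of_le_div
          (le_of_lt (hpq ⟨hpt.trans (htr.trans_lt hx.1), hx.2.trans hsq⟩).2)
  have hc_pos : 0 < c := pos_of_gt hkc
  simp only [levelDensity, iInf_lt_iff] at hkc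
  obtain ⟨α, ⟨hα, hαt⟩, hsup⟩ := hkc
  have RR_le : RR w v α (ENNReal.ofReal s) ≤ c :=
    le_trans (le_iSup₂_of_le (ENNReal.ofReal s) ⟨hts', hsa⟩ le_rfl) hsup.le
  obtain ⟨α', hα', hlevel⟩ := hv.exists_isLevelInterval_left hα hαt hts'
    (hv.ofReal_mem_finiteEnds hsa) hc_pos le_RR RR_le
  exact (hno α' _ hlevel hα').not_gt hts'

end IsAdmissible

end LevelDensity

section LevelFunction

variable {α t : ℝ} {β ζ : ℝ≥0∞} {c : ℝ≥0∞}

theorem ae_continuousAt_of_antitoneOn {X : Type*} [LinearOrder X] [TopologicalSpace X]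
    [OrderTopology X] [SecondCountableTopology X] {g : ℝ → X} {s : Set ℝ} (hs : IsOpen s)
    (hg : AntitoneOn g s) : ∀ᵐ t ∂(volume.restrict s), ContinuousAt g t := by
  have hnull := hg.countable_not_continuousWithinAt.measure_zero volume
  filter_upwards [ae_restrict_of_ae (measure_eq_zero_iff_ae_notMem.1 hnull),
    ae_restrict_mem hs.measurableSet] with t ht hts
  exact (not_not.1 fun hc ↦ ht ⟨hts, hc⟩ : ContinuousWithinAt g s t).continuousAt
    (hs.mem_nhds hts)

/-- The representative `k · w` of the level function, with `k` the `levelDensity`: it agrees with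
`f⁰` almost everywhere and, unlike `f⁰`, is visibly decreasing. -/
noncomputable def levelRep (a : ℝ≥0∞) (w : ℝ → ℝ) (v : ℝ → ℝ≥0∞) (t : ℝ) : ℝ≥0∞ :=
  levelDensity a w v t * weight w t

theorem isMaxLevelInterval_extIoo_subset_Iset (h : IsMaxLevelInterval a w v α β) :
    extIoo α β ⊆ Iset a :=
  (extIoo_subset_Iset h.1.1).trans (Iset_mono h.1.2.2.1)

namespace IsAdmissible

theorem levelDensity_ne_top (hv : IsAdmissible a w v) (ht : t ∈ Iset a) :
    levelDensity a w v t ≠ ∞ := by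
  obtain ⟨K, M, hK, hM, hle⟩ := hv.exists_bound
  have weight_pos := hv.lintegral_weight_pos le_rfl (by simpa using ht.1) ht.2.le
  have bound_ne_top : K / primitive (weight w) (ENNReal.ofReal t) + M ≠ ∞ :=
    ENNReal.add_ne_top.2 ⟨ENNReal.div_ne_top hK weight_pos.ne', hM⟩
  refine ne_top_of_le_ne_top bound_ne_top (le_of_not_gt fun hlt ↦ ?_)
  obtain ⟨s, hts, hsa, hs⟩ := exists_lt_Rq_of_lt_levelDensity hlt le_rfl ht.1
  refine hs.not_ge ?_
  rw [Rq, ← primitive_ofReal, ← primitive_ofReal]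
  calc primitive v (ENNReal.ofReal s) / primitive (weight w) (ENNReal.ofReal s)
      ≤ (K + M * primitive (weight w) (ENNReal.ofReal s)) /
          primitive (weight w) (ENNReal.ofReal s) := by gcongr; exact hle _ hsa
    _ ≤ K / primitive (weight w) (ENNReal.ofReal t) + M := by
        rw [ENNReal.add_div]
        gcongr
        · exact primitive_mono _ (ENNReal.ofReal_le_ofReal hts.le)
        · exact ENNReal.div_le_of_le_mul le_rfl

theorem levelFun_of_isMaxLevelInterval (hv : IsAdmissible a w v)
    (hmax : IsMaxLevelInterval a w v α β) (ht : t ∈ extIoo α β) :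
    levelFun a w v t = levelRep a w v t := by
  have h : ∃ α β, IsMaxLevelInterval a w v α β ∧ α < t ∧ ENNReal.ofReal t < β :=
    ⟨α, β, hmax, ht⟩
  obtain ⟨hmax', hα', hβ'⟩ := h.choose_spec.choose_spec
  rw [levelFun, dif_pos h, levelRep, hv.levelDensity_of_isMaxLevelInterval hmax' hα' hβ']

theorem levelFun_ae_eq (hv : IsAdmissible a w v) :
    levelFun a w v =ᵐ[volume.restrict (Iset a)] levelRep a w v := by
  filter_upwards [ae_continuousAt_of_antitoneOn (isOpen_Iset a) hv.antitoneOn,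
    ae_continuousAt_of_antitoneOn (isOpen_Iset a) (hv.antitone.antitoneOn _),
    ae_restrict_mem (measurableSet_Iset a)] with t hwt hvt ht
  by_cases h : ∃ α β, IsMaxLevelInterval a w v α β ∧ α < t ∧ ENNReal.ofReal t < β
  · obtain ⟨α, β, hmax, ht⟩ := h
    exact hv.levelFun_of_isMaxLevelInterval hmax ht
  have hno (α : ℝ) (β : ℝ≥0∞) (hlevel : IsLevelInterval a w v α β) (hαt : α < t) :
      β ≤ ENNReal.ofReal t := by
    by_contra! htβ
    obtain ⟨α', β', hmax, hα', hβ'⟩ := hv.exists_isMaxLevelInterval hlevel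
    exact h ⟨α', β', hmax, hα'.trans_lt hαt, htβ.trans_le hβ'⟩
  have hcont := hv.continuousAt_div_weight ht hwt hvt
  rw [levelFun, dif_neg h, levelRep, le_antisymm (hv.levelDensity_le_div_weight ht hcont hno)
    (hv.div_weight_le_levelDensity ht hcont hno)]
  exact (ENNReal.div_mul_cancel (hv.weight_ne_zero ht) ENNReal.ofReal_ne_top).symm

theorem RR_mul_lintegral_weight (hv : IsAdmissible a w v) (hlevel : IsLevelInterval a w v α β) :
    RR w v α β * ∫⁻ s in extIoo α β, weight w s = ∫⁻ s in extIoo α β, v s := by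
  obtain ⟨hα, hαβ, hβ, hpos, -⟩ := hlevel
  by_cases hβE : β ∈ finiteEnds a w
  · rw [hv.RR_eq_meanRatio hα hαβ hβE, meanRatio, ENNReal.div_mul_cancel
      (hv.lintegral_weight_pos hα hαβ hβ).ne' (IsWeight.lintegral_weight_ne_top hα hβE)]
  obtain ⟨rfl, rfl, hW⟩ := hv.eq_top_of_notMem_finiteEnds hβ hβE
  have weight_top : ∫⁻ s in extIoo α ∞, weight w s = ∞ := by
    rw [primitive_eq_add_lintegral _ hα le_top, ENNReal.add_eq_top] at hW
    exact hW.resolve_left (hv.mem_finiteEnds_of_lt ENNReal.ofReal_lt_top).2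
  rw [weight_top, ENNReal.mul_top hpos.ne']
  by_contra hne
  refine hpos.not_ge ?_
  have htendsto := ENNReal.Tendsto.const_div
    (tendsto_lintegral_Ioo_atTop hv.measurable_weight α) (Or.inr (Ne.symm hne))
  rw [weight_top, ENNReal.div_top] at htendsto
  rw [RR_top, ← htendsto.limsup_eq]
  refine limsup_le_limsup (.of_forall fun t ↦ ENNReal.div_le_div_right ?_ _)
  exact lintegral_mono_set fun s hs ↦ ⟨hs.1, ENNReal.ofReal_lt_top⟩

theorem lintegral_levelRep_of_isMaxLevelInterval (hv : IsAdmissible a w v)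
    (hmax : IsMaxLevelInterval a w v α β) {s : Set ℝ} (hs : MeasurableSet s)
    (hsub : s ⊆ extIoo α β) :
    ∫⁻ t in s, levelRep a w v t = RR w v α β * ∫⁻ t in s, weight w t := by
  rw [← lintegral_const_mul _ hv.measurable_weight]
  refine setLIntegral_congr_fun hs fun t ht ↦ ?_
  rw [levelRep, hv.levelDensity_of_isMaxLevelInterval hmax (hsub ht).1 (hsub ht).2]

theorem pairwiseDisjoint_isMaxLevelInterval (hv : IsAdmissible a w v) :
    {p : ℝ × ℝ≥0∞ | IsMaxLevelInterval a w v p.1 p.2}.PairwiseDisjoint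
      fun p ↦ extIoo p.1 p.2 := by
  intro p hp q hq hpq
  refine Set.disjoint_left.2 fun t htp htq ↦ hpq (Prod.ext_iff.2 ?_)
  exact hv.isMaxLevelInterval_unique hp hq htp.1 htp.2 htq.1 htq.2

theorem countable_isMaxLevelInterval (hv : IsAdmissible a w v) :
    {p : ℝ × ℝ≥0∞ | IsMaxLevelInterval a w v p.1 p.2}.Countable := by
  refine hv.pairwiseDisjoint_isMaxLevelInterval.countable_of_isOpen
    (fun p _ ↦ isOpen_extIoo p.1 p.2) fun p hp ↦ ?_
  obtain ⟨hp_nonneg, hlt, -⟩ := hp.1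
  exact nonempty_extIoo hp_nonneg hlt

theorem lintegral_levelRep_eq_of_saturated (hv : IsAdmissible a w v) {S : Set ℝ}
    (hS : MeasurableSet S) (hSI : S ⊆ Iset a)
    (hsat : ∀ α β, IsMaxLevelInterval a w v α β → extIoo α β ⊆ S ∨ Disjoint (extIoo α β) S) :
    ∫⁻ t in S, levelRep a w v t = ∫⁻ t in S, v t := by
  set P : Set (ℝ × ℝ≥0∞) := {p | IsMaxLevelInterval a w v p.1 p.2 ∧ extIoo p.1 p.2 ⊆ S}
  have P_subset : P ⊆ {p | IsMaxLevelInterval a w v p.1 p.2} := fun p hp ↦ hp.1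
  have hdisj := hv.pairwiseDisjoint_isMaxLevelInterval.subset P_subset
  have hcount : P.Countable := hv.countable_isMaxLevelInterval.mono P_subset
  have hmeas (p : ℝ × ℝ≥0∞) (_ : p ∈ P) : MeasurableSet (extIoo p.1 p.2) :=
    measurableSet_extIoo _ _
  set U := ⋃ p ∈ P, extIoo p.1 p.2
  have hU : MeasurableSet U := .biUnion hcount hmeas
  have levelRep_eq_off : ∀ᵐ t ∂(volume.restrict (S \ U)), levelRep a w v t = v t := by
    filter_upwards [ae_restrict_of_ae_restrict_of_subset (sdiff_subset.trans hSI)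
      hv.levelFun_ae_eq, ae_restrict_mem (hS.diff hU)] with t ht htS
    rw [← ht, levelFun, dif_neg]
    rintro ⟨α, β, hmax, htαβ⟩
    rcases hsat α β hmax with h | h
    · exact htS.2 (mem_biUnion (show (α, β) ∈ P from ⟨hmax, h⟩) htαβ)
    · exact Set.disjoint_left.1 h htαβ htS.1
  rw [← union_sdiff_cancel (iUnion₂_subset fun p hp ↦ hp.2 : U ⊆ S),
    lintegral_union (hS.diff hU) disjoint_sdiff_right,
    lintegral_union (hS.diff hU) disjoint_sdiff_right, lintegral_congr_ae levelRep_eq_off,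
    lintegral_biUnion hcount hmeas hdisj, lintegral_biUnion hcount hmeas hdisj]
  congr 1
  refine tsum_congr fun p ↦ ?_
  rw [hv.lintegral_levelRep_of_isMaxLevelInterval p.2.1 (measurableSet_extIoo _ _) Subset.rfl,
    hv.RR_mul_lintegral_weight p.2.1.1]

theorem primitive_levelRep_eq (hv : IsAdmissible a w v) (hζ : ζ ≤ a)
    (hno : ∀ α β, IsMaxLevelInterval a w v α β → ENNReal.ofReal α < ζ → β ≤ ζ) :
    primitive (levelRep a w v) ζ = primitive v ζ := by
  refine hv.lintegral_levelRep_eq_of_saturated (measurableSet_Iset ζ) (Iset_mono hζ)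
    fun α β hmax ↦ ?_
  rcases lt_or_ge (ENNReal.ofReal α) ζ with h | h
  · exact Or.inl ((extIoo_subset_Iset hmax.1.1).trans (Iset_mono (hno α β hmax h)))
  · refine Or.inr (Set.disjoint_left.2 fun t ht htζ ↦ ?_)
    exact (htζ.2.trans_le h).not_ge (ENNReal.ofReal_le_ofReal ht.1.le)

theorem primitive_levelRep_of_isMaxLevelInterval (hv : IsAdmissible a w v)
    (hmax : IsMaxLevelInterval a w v α β) (hαζ : ENNReal.ofReal α ≤ ζ) (hζβ : ζ ≤ β) :
    primitive (levelRep a w v) ζ =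
      primitive v (ENNReal.ofReal α) + RR w v α β * ∫⁻ s in extIoo α ζ, weight w s := by
  obtain ⟨hα, hαβ, hβ, -⟩ := hmax.1
  rw [primitive_eq_add_lintegral _ hα hαζ, hv.primitive_levelRep_eq (hαβ.le.trans hβ),
    hv.lintegral_levelRep_of_isMaxLevelInterval hmax (measurableSet_extIoo _ _)
      fun s hs ↦ ⟨hs.1, hs.2.trans_le hζβ⟩]
  intro α' β' hmax' hα'α
  by_contra! hαβ'
  have hα'α := (ENNReal.ofReal_lt_ofReal_iff_of_nonneg hmax'.1.1).1 hα'α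
  obtain ⟨t, hαt, ht⟩ := nonempty_extIoo hα (lt_min hαβ hαβ')
  obtain ⟨htβ, htβ'⟩ := lt_min_iff.1 ht
  exact hα'α.ne' (hv.isMaxLevelInterval_unique hmax hmax' hαt htβ (hα'α.trans hαt) htβ').1

theorem primitive_le_primitive_levelRep (hv : IsAdmissible a w v) (hζ : ζ ≤ a) :
    primitive v ζ ≤ primitive (levelRep a w v) ζ := by
  by_cases hno : ∀ α β, IsMaxLevelInterval a w v α β → ENNReal.ofReal α < ζ → β ≤ ζ
  · exact (hv.primitive_levelRep_eq hζ hno).ge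
  push Not at hno
  obtain ⟨α, β, hmax, hαζ, hζβ⟩ := hno
  have hα := hmax.1.1
  have hζE : ζ ∈ finiteEnds a w := hv.mem_finiteEnds_of_lt (hζβ.trans_le hmax.1.2.2.1)
  rw [hv.primitive_levelRep_of_isMaxLevelInterval hmax hαζ.le hζβ.le,
    primitive_eq_add_lintegral v hα hαζ.le]
  gcongr
  rw [← ENNReal.div_le_iff (hv.lintegral_weight_pos hα hαζ hζ).ne'
    (IsWeight.lintegral_weight_ne_top hα hζE), ← meanRatio, ← hv.RR_eq_meanRatio hα hαζ hζE]
  exact RR_le_of_isLevelInterval hmax.1 hαζ hζβ.le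

theorem primitive_levelRep_ne_top (hv : IsAdmissible a w v) (hζ : ζ ∈ finiteEnds a w) :
    primitive (levelRep a w v) ζ ≠ ∞ := by
  by_cases hno : ∀ α β, IsMaxLevelInterval a w v α β → ENNReal.ofReal α < ζ → β ≤ ζ
  · rw [hv.primitive_levelRep_eq hζ.1 hno]
    exact hv.primitive_ne_top_of_mem hζ
  push Not at hno
  obtain ⟨α, β, hmax, hαζ, hζβ⟩ := hno
  obtain ⟨hα, hαβ, -⟩ := hmax.1
  obtain ⟨t, ht⟩ := nonempty_extIoo hα hαβ
  rw [hv.primitive_levelRep_of_isMaxLevelInterval hmax hαζ.le hζβ.le,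
    ← hv.levelDensity_of_isMaxLevelInterval hmax ht.1 ht.2]
  exact ENNReal.add_ne_top.2
    ⟨hv.primitive_ne_top_of_mem (mem_finiteEnds_of_le hζ hαζ.le), ENNReal.mul_ne_top
      (hv.levelDensity_ne_top (isMaxLevelInterval_extIoo_subset_Iset hmax ht))
      (IsWeight.lintegral_weight_ne_top hα hζ)⟩

end IsAdmissible

end LevelFunction

section Rearr

variable {f u h : ℝ → ℝ} {F : ℝ → ℝ≥0∞} {c x : ℝ}

theorem setLIntegral_Ioo_comp_mul_left (hF : Measurable F) (hc : 0 < c) :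
    ∫⁻ t in Ioo 0 x, F t = ENNReal.ofReal c * ∫⁻ t in Ioo 0 (x / c), F (c * t) := by
  conv_lhs => rw [← Real.smul_map_volume_mul_left hc.ne', abs_of_pos hc]
  rw [Measure.restrict_smul, lintegral_smul_measure, smul_eq_mul,
    setLIntegral_map measurableSet_Ioo hF (measurable_const_mul c),
    preimage_const_mul_Ioo₀ _ _ hc, zero_div]

theorem lintegral_Ioo_rearr_add_le (hf : ∀ᵐ x ∂(volI a), f x = u x + h x) (x : ℝ) :
    ∫⁻ t in Ioo 0 x, rearr (volI a) f t ≤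
      2 * ((∫⁻ t in Ioo 0 (x / 2), rearr (volI a) u t) +
        ∫⁻ t in Ioo 0 (x / 2), rearr (volI a) h t) := by
  rw [setLIntegral_Ioo_comp_mul_left (rearr_antitone _ f).measurable two_pos,
    ENNReal.ofReal_ofNat, ← lintegral_add_left (rearr_antitone _ u).measurable]
  refine mul_le_mul_right (setLIntegral_mono' measurableSet_Ioo fun t ht ↦ ?_) 2
  rw [two_mul]
  exact rearr_add_le hf ht.1.le ht.1.le

namespace IsWeight

theorem lintegral_Ioo_rearr_le_MWnorm_mul (hw : IsWeight a w) (hx : x ∈ Iset a) :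
    ∫⁻ t in Ioo 0 x, rearr (volI a) h t ≤ MWnorm a w h * ∫⁻ t in Ioo 0 x, weight w t := by
  have weight_pos := hw.lintegral_weight_pos le_rfl (by simpa using hx.1) hx.2.le
  have weight_ne_top := hw.primitive_ne_top x hx
  rw [extIoo_ofReal le_rfl] at weight_pos
  rw [primitive_ofReal] at weight_ne_top
  rw [← ENNReal.div_le_iff weight_pos.ne' weight_ne_top]
  exact le_iSup₂_of_le x hx le_rfl

theorem lintegral_Ioo_rearr_le (hw : IsWeight a w) (hu : Measurable u)
    (hf : ∀ᵐ x ∂(volI a), f x = u x + h x) (hx : ENNReal.ofReal x ≤ a) :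
    ∫⁻ t in Ioo 0 x, rearr (volI a) f t ≤
      2 * (∫⁻ x in Iset a, ENNReal.ofReal |u x|) +
        2 * MWnorm a w h * ∫⁻ t in Ioo 0 x, weight w t := by
  rcases le_or_gt x 0 with hx_nonpos | hx_pos
  · simp [Ioo_eq_empty hx_nonpos.not_gt]
  have half_mem : x / 2 ∈ Iset a :=
    ⟨half_pos hx_pos, (ofReal_lt_ofReal (half_pos hx_pos).le (half_lt_self hx_pos)).trans_le hx⟩
  refine (lintegral_Ioo_rearr_add_le hf x).trans ?_
  rw [mul_add, mul_assoc]
  refine add_le_add (mul_le_mul_right ?_ 2) (mul_le_mul_right ?_ 2)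
  · exact (lintegral_mono_set Ioo_subset_Ioi_self).trans (lintegral_rearr_le hu)
  · refine (hw.lintegral_Ioo_rearr_le_MWnorm_mul half_mem).trans ?_
    gcongr
    exact half_le_self hx_pos.le

theorem isAdmissible_rearr (hw : IsWeight a w) (hu : Measurable u)
    (hf : ∀ᵐ x ∂(volI a), f x = u x + h x) (hu_int : ∫⁻ x in Iset a, ENNReal.ofReal |u x| ≠ ∞)
    (hh : MWnorm a w h ≠ ∞) : IsAdmissible a w (rearr (volI a) f) := by
  refine ⟨hw, rearr_antitone _ _, 2 * _, 2 * _, ENNReal.mul_ne_top ENNReal.ofNat_ne_top hu_int,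
    ENNReal.mul_ne_top ENNReal.ofNat_ne_top hh, fun β hβ ↦ ?_⟩
  rcases eq_or_ne β ∞ with rfl | hβ_top
  · refine le_of_tendsto' (tendsto_primitive_atTop (rearr_antitone _ _).measurable) fun x ↦ ?_
    rw [primitive_ofReal]
    refine (hw.lintegral_Ioo_rearr_le hu hf (le_top.trans hβ)).trans ?_
    rw [← primitive_ofReal]
    gcongr
    exact primitive_mono _ le_top
  · rw [← ENNReal.ofReal_toReal hβ_top] at hβ ⊢
    simpa only [primitive_ofReal] using hw.lintegral_Ioo_rearr_le hu hf hβ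

end IsWeight

theorem rearrE_ae_eq_of_antitoneOn (hF : AntitoneOn F (Iset a)) :
    rearrE (volI a) F =ᵐ[volume.restrict (Iset a)] F := by
  filter_upwards [ae_continuousAt_of_antitoneOn (isOpen_Iset a) hF,
    ae_restrict_mem (measurableSet_Iset a)] with t hcont ht
  refine le_antisymm (rearrE_le_of_forall_gt fun d hd ↦ ?_) ?_
  · rw [volI, Measure.restrict_apply' (measurableSet_Iset a), ← volume_Iset (.ofReal t)]
    refine measure_mono fun x hx ↦ ⟨hx.2.1, (ENNReal.ofReal_lt_ofReal_iff ht.1).2 ?_⟩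
    by_contra! htx
    exact (hd.trans hx.1).not_ge (hF ht hx.2 htx)
  refine le_of_not_gt fun hlt ↦ ?_
  obtain ⟨c, hc, hcF⟩ := exists_between hlt
  have near_t : ∀ᶠ x in 𝓝[>] t, c < F x ∧ x ∈ Iset a :=
    ((hcont.eventually (lt_mem_nhds hcF)).and ((isOpen_Iset a).mem_nhds ht)).filter_mono
      nhdsWithin_le_nhds
  obtain ⟨x, ⟨hcx, hxI⟩, htx⟩ := (near_t.and self_mem_nhdsWithin).exists
  refine hc.not_ge (le_sInf fun d ⟨_, hd⟩ ↦ le_of_not_gt fun hdc ↦ hd.not_gt ?_)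
  calc ENNReal.ofReal t < ENNReal.ofReal x := (ENNReal.ofReal_lt_ofReal_iff hxI.1).2 htx
    _ = volume (Iset (.ofReal x)) := (volume_Iset _).symm
    _ ≤ volume ({y | d < F y} ∩ Iset a) := by
        refine measure_mono fun y hy ↦ ?_
        have hyI : y ∈ Iset a := Iset_mono hxI.2.le hy
        exact ⟨hdc.trans (hcx.trans_le
          (hF hyI hxI ((ENNReal.ofReal_lt_ofReal_iff hxI.1).1 hy.2).le)), hyI⟩
    _ = volI a {y | d < F y} := (Measure.restrict_apply' (measurableSet_Iset a)).symm

theorem lintegral_Ioo_rearr (g : ℝ → ℝ) (x : ℝ) : ∫⁻ t in Ioo 0 x, rearr (volI a) g t =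
    primitive (rearr (volI a) g) (min (ENNReal.ofReal x) a) := by
  have Iset_min : Iset (min (ENNReal.ofReal x) a) = Ioo 0 x ∩ Iset a := by
    rw [← Iset_ofReal]
    ext t
    simp only [Iset, mem_inter_iff, mem_ofPred_eq, lt_min_iff]
    tauto
  rw [primitive, Iset_min, inter_comm, ← setLIntegral_indicator (measurableSet_Iset a)]
  refine setLIntegral_congr_fun measurableSet_Ioo fun t ht ↦ ?_
  by_cases htI : t ∈ Iset a
  · rw [indicator_of_mem htI]
  · rw [indicator_of_notMem htI, rearr_eq_zero (not_lt.1 fun h ↦ htI ⟨ht.1, h⟩)]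

namespace IsWeight

theorem min_mem_finiteEnds (hw : IsWeight a w) (x : ℝ) :
    min (ENNReal.ofReal x) a ∈ finiteEnds a w := by
  by_contra hmem
  exact ((min_le_left _ _).trans_lt ENNReal.ofReal_lt_top).ne
    (hw.eq_top_of_notMem_finiteEnds (min_le_right _ _) hmem).1

end IsWeight

namespace IsAdmissible

theorem measurable_levelRep (hv : IsAdmissible a w v) : Measurable (levelRep a w v) :=
  levelDensity_antitone.measurable.mul hv.measurable_weight

theorem rearr_toReal_levelRep_ae_eq (hv : IsAdmissible a w v) :
    rearr (volI a) (fun t ↦ (levelRep a w v t).toReal)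
      =ᵐ[volume.restrict (Iset a)] levelRep a w v := by
  have ofReal_toReal {t : ℝ} (ht : t ∈ Iset a) :
      levelRep a w v t = ENNReal.ofReal |(levelRep a w v t).toReal| := by
    rw [abs_of_nonneg ENNReal.toReal_nonneg, ENNReal.ofReal_toReal]
    exact ENNReal.mul_ne_top (hv.levelDensity_ne_top ht) ENNReal.ofReal_ne_top
  have antitoneOn_levelRep : AntitoneOn (levelRep a w v) (Iset a) := fun s hs t ht hst ↦
    mul_le_mul' (levelDensity_antitone hst) (ENNReal.ofReal_le_ofReal (hv.antitoneOn hs ht hst))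
  filter_upwards [rearrE_ae_eq_of_antitoneOn (antitoneOn_levelRep.congr fun _ ↦ ofReal_toReal),
    ae_restrict_mem (measurableSet_Iset a)] with t ht htI
  exact ht.trans (ofReal_toReal htI).symm

theorem lintegral_Ioo_rearr_toReal_levelRep (hv : IsAdmissible a w v) (x : ℝ) :
    ∫⁻ t in Ioo 0 x, rearr (volI a) (fun t ↦ (levelRep a w v t).toReal) t =
      primitive (levelRep a w v) (min (ENNReal.ofReal x) a) := by
  rw [lintegral_Ioo_rearr]
  exact lintegral_congr_ae (ae_restrict_of_ae_restrict_of_subset (Iset_mono (min_le_right _ _))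
    hv.rearr_toReal_levelRep_ae_eq)

end IsAdmissible

end Rearr

/-- Orlicz functions on `[0, ∞)`; the values of `φ` on the negative half-line are irrelevant. -/
structure IsOrlicz (φ : ℝ → ℝ) : Prop where
  convexOn : ConvexOn ℝ (Ici 0) φ
  map_zero : φ 0 = 0
  pos : ∀ t : ℝ, 0 < t → 0 < φ t

section Orlicz

variable {φ : ℝ → ℝ} {x y : ℝ} {s t : ℝ≥0∞}

theorem phiE_of_ne_top (φ : ℝ → ℝ) (ht : t ≠ ∞) : phiE φ t = ENNReal.ofReal (φ t.toReal) :=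
  if_neg ht

theorem phiE_top (φ : ℝ → ℝ) : phiE φ ∞ = ∞ := if_pos rfl

theorem add_rightDeriv_mul_le (hφ : ConvexOn ℝ (Ici 0) φ) (hx : 0 < x) (hy : 0 ≤ y) :
    φ x + derivWithin φ (Ioi x) x * y ≤ φ y + derivWithin φ (Ioi x) x * x := by
  have hx_mem : x ∈ interior (Ici (0 : ℝ)) := by rwa [interior_Ici]
  rcases lt_trichotomy x y with hxy | rfl | hyx
  · have deriv_le_slope := hφ.rightDeriv_le_slope_of_mem_interior hx_mem hy hxy
    rw [slope_def_field, le_div_iff₀ (sub_pos.2 hxy)] at deriv_le_slope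
    linarith
  · rfl
  · have slope_le_deriv := (hφ.slope_le_leftDeriv_of_mem_interior hy hx_mem hyx).trans
      (hφ.leftDeriv_le_rightDeriv_of_mem_interior hx_mem)
    rw [slope_def_field, div_le_iff₀ (sub_pos.2 hyx)] at slope_le_deriv
    linarith

namespace IsOrlicz

theorem nonneg (hφ : IsOrlicz φ) (hx : 0 ≤ x) : 0 ≤ φ x := by
  rcases hx.eq_or_lt with rfl | hx_pos
  exacts [hφ.map_zero.ge, (hφ.pos x hx_pos).le]

theorem phiE_zero (hφ : IsOrlicz φ) : phiE φ 0 = 0 := by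
  rw [phiE_of_ne_top φ ENNReal.zero_ne_top, ENNReal.toReal_zero, hφ.map_zero, ENNReal.ofReal_zero]

theorem exists_monotone_subgradient (hφ : IsOrlicz φ) : ∃ q : ℝ → ℝ, Monotone q ∧ (∀ x, 0 ≤ q x) ∧
    ∀ x y, 0 ≤ x → 0 ≤ y → φ x + q x * y ≤ φ y + q x * x := by
  have deriv_nonneg {x : ℝ} (hx : 0 < x) : 0 ≤ derivWithin φ (Ioi x) x := by
    have tangent_at_zero := add_rightDeriv_mul_le hφ.convexOn hx le_rfl
    rw [mul_zero, add_zero, hφ.map_zero, zero_add] at tangent_at_zero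
    exact nonneg_of_mul_nonneg_left ((hφ.pos x hx).le.trans tangent_at_zero) hx
  refine ⟨(Ioi 0).indicator fun x ↦ derivWithin φ (Ioi x) x, fun x y hxy ↦ ?_,
    indicator_nonneg fun x ↦ deriv_nonneg, fun x y hx hy ↦ ?_⟩
  · by_cases hx : 0 < x
    · have hy := hx.trans_le hxy
      rw [indicator_of_mem (mem_Ioi.2 hx), indicator_of_mem (mem_Ioi.2 hy)]
      exact hφ.convexOn.monotoneOn_rightDeriv (by rwa [interior_Ici]) (by rwa [interior_Ici]) hxy
    · rw [indicator_of_notMem (by simpa using hx)]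
      exact indicator_nonneg (fun x ↦ deriv_nonneg) y
  · rcases hx.eq_or_lt with rfl | hx_pos
    · simpa [hφ.map_zero] using hφ.nonneg hy
    · rw [indicator_of_mem (mem_Ioi.2 hx_pos)]
      exact add_rightDeriv_mul_le hφ.convexOn hx_pos hy

theorem monotone_phiE (hφ : IsOrlicz φ) : Monotone (phiE φ) := by
  obtain ⟨q, -, hq, tangent⟩ := hφ.exists_monotone_subgradient
  intro s t hst
  rcases eq_or_ne t ∞ with rfl | ht
  · rw [phiE_top]
    exact le_top
  rw [phiE_of_ne_top φ (ne_top_of_le_ne_top ht hst), phiE_of_ne_top φ ht]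
  refine ENNReal.ofReal_le_ofReal ?_
  have := tangent s.toReal t.toReal ENNReal.toReal_nonneg ENNReal.toReal_nonneg
  have := mul_le_mul_of_nonneg_left (ENNReal.toReal_mono ht hst) (hq s.toReal)
  linarith

theorem exists_monotone_subgradient_phiE (hφ : IsOrlicz φ) : ∃ q : ℝ → ℝ, Monotone q ∧
    (∀ x, 0 ≤ q x) ∧ ∀ s t, s ≠ ∞ → phiE φ s + ENNReal.ofReal (q s.toReal) * t ≤
      phiE φ t + ENNReal.ofReal (q s.toReal) * s := by
  obtain ⟨q, q_mono, hq, tangent⟩ := hφ.exists_monotone_subgradient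
  refine ⟨q, q_mono, hq, fun s t hs ↦ ?_⟩
  rcases eq_or_ne t ∞ with rfl | ht
  · simp [phiE_top]
  have hφ_nonneg (r : ℝ≥0∞) : 0 ≤ φ r.toReal := hφ.nonneg ENNReal.toReal_nonneg
  have mul_nonneg (r : ℝ≥0∞) : 0 ≤ q s.toReal * r.toReal :=
    mul_nonneg (hq _) ENNReal.toReal_nonneg
  have mul_eq {r : ℝ≥0∞} (hr : r ≠ ∞) :
      ENNReal.ofReal (q s.toReal) * r = ENNReal.ofReal (q s.toReal * r.toReal) := by
    rw [ENNReal.ofReal_mul (hq _), ENNReal.ofReal_toReal hr]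
  rw [phiE_of_ne_top φ hs, phiE_of_ne_top φ ht, mul_eq hs, mul_eq ht,
    ← ENNReal.ofReal_add (hφ_nonneg s) (mul_nonneg t),
    ← ENNReal.ofReal_add (hφ_nonneg t) (mul_nonneg s)]
  exact ENNReal.ofReal_le_ofReal (tangent _ _ ENNReal.toReal_nonneg ENNReal.toReal_nonneg)

end IsOrlicz

end Orlicz

section Comparison

variable {G : ℝ → ℝ≥0∞}

theorem exists_ae_eq_Iset {S : Set ℝ} (hpos : ∀ x ∈ S, 0 < x)
    (hlower : ∀ x ∈ S, ∀ y, 0 < y → y ≤ x → y ∈ S) : ∃ ζ, S =ᵐ[volume] Iset ζ := by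
  set ζ := ⨆ x ∈ S, ENNReal.ofReal x
  refine ⟨ζ, EventuallyLE.antisymm ?_ (LE.le.eventuallyLE fun y hy ↦ ?_)⟩
  · have diff_subset : S \ Iset ζ ⊆ {ζ.toReal} := fun x hx ↦ by
      have ofReal_eq : ENNReal.ofReal x = ζ := le_antisymm
        (le_iSup₂_of_le x hx.1 le_rfl) (not_lt.1 fun hlt ↦ hx.2 ⟨hpos x hx.1, hlt⟩)
      rw [mem_singleton_iff, ← ofReal_eq, ENNReal.toReal_ofReal (hpos x hx.1).le]
    exact ae_le_set.2 (measure_mono_null diff_subset Real.volume_singleton)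
  · obtain ⟨x, hyx⟩ := lt_iSup_iff.1 hy.2
    obtain ⟨hx, hyx⟩ := lt_iSup_iff.1 hyx
    exact hlower x hx y hy.1 ((ENNReal.ofReal_lt_ofReal_iff (hpos x hx)).1 hyx).le

theorem primitive_le_primitive_of_forall_Ioo (hv : Measurable v) (hG : Measurable G)
    (h : ∀ x : ℝ, 0 < x → ∫⁻ t in Ioo 0 x, v t ≤ ∫⁻ t in Ioo 0 x, G t) (ζ : ℝ≥0∞) :
    primitive v ζ ≤ primitive G ζ := by
  rcases eq_or_ne ζ ∞ with rfl | hζ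
  · refine le_of_tendsto_of_tendsto (tendsto_primitive_atTop hv) (tendsto_primitive_atTop hG) ?_
    filter_upwards [eventually_gt_atTop 0] with x hx
    simpa only [primitive_ofReal] using h x hx
  rcases eq_or_ne ζ 0 with rfl | hζ_zero
  · rw [primitive_zero, primitive_zero]
  rw [← ENNReal.ofReal_toReal hζ, primitive_ofReal, primitive_ofReal]
  exact h _ (ENNReal.toReal_pos hζ_zero hζ)

theorem lintegral_ofReal_mul_eq_lintegral_superlevel {X : Type*} [MeasurableSpace X]
    (μ : Measure X) {p : X → ℝ} {F : X → ℝ≥0∞} (hp : Measurable p) (hp_nonneg : ∀ x, 0 ≤ p x)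
    (hF : Measurable F) :
    ∫⁻ x, ENNReal.ofReal (p x) * F x ∂μ = ∫⁻ s in Ioi 0, ∫⁻ x in {x | s < p x}, F x ∂μ := by
  have layercake := lintegral_eq_lintegral_meas_lt (μ.withDensity F) (.of_forall hp_nonneg)
    hp.aemeasurable
  rw [lintegral_withDensity_eq_lintegral_mul _ hF hp.ennreal_ofReal] at layercake
  simp only [Pi.mul_apply, withDensity_apply F (measurableSet_lt measurable_const hp),
    mul_comm (F _)] at layercake
  exact layercake

theorem IsAdmissible.lintegral_levelRep_le (hv : IsAdmissible a w v) (hG : Measurable G)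
    (h : ∀ x : ℝ, 0 < x → ∫⁻ t in Ioo 0 x, v t ≤ ∫⁻ t in Ioo 0 x, G t) {P : ℝ≥0∞ → ℝ}
    (hP : Monotone P) (hP_nonneg : ∀ x, 0 ≤ P x) :
    ∫⁻ t in Iset a, ENNReal.ofReal (P (levelDensity a w v t)) * levelRep a w v t ≤
      ∫⁻ t in Iset a, ENNReal.ofReal (P (levelDensity a w v t)) * G t := by
  have P_antitone : Antitone fun t ↦ P (levelDensity a w v t) :=
    fun _ _ hst ↦ hP (levelDensity_antitone hst)
  rw [lintegral_ofReal_mul_eq_lintegral_superlevel _ P_antitone.measurable (fun _ ↦ hP_nonneg _)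
      hv.measurable_levelRep,
    lintegral_ofReal_mul_eq_lintegral_superlevel _ P_antitone.measurable (fun _ ↦ hP_nonneg _) hG]
  refine lintegral_mono fun s ↦ ?_
  set S : Set ℝ := {t | s < P (levelDensity a w v t)}
  have hS : MeasurableSet S := measurableSet_lt measurable_const P_antitone.measurable
  rw [Measure.restrict_restrict hS]
  obtain ⟨ζ, hζ⟩ : ∃ ζ, (S ∩ Iset a : Set ℝ) =ᵐ[volume] Iset ζ :=
    exists_ae_eq_Iset (fun x hx ↦ hx.2.1) fun x hx y hy hyx ↦
      ⟨hx.1.trans_le (P_antitone hyx), hy, (ENNReal.ofReal_le_ofReal hyx).trans_lt hx.2.2⟩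
  rw [hv.lintegral_levelRep_eq_of_saturated (hS.inter (measurableSet_Iset a)) inter_subset_right,
    setLIntegral_congr hζ, setLIntegral_congr hζ]
  · exact primitive_le_primitive_of_forall_Ioo hv.antitone.measurable hG h ζ
  intro α β hmax
  have density_eq {t : ℝ} (ht : t ∈ extIoo α β) : levelDensity a w v t = RR w v α β :=
    hv.levelDensity_of_isMaxLevelInterval hmax ht.1 ht.2
  by_cases hs : s < P (RR w v α β)
  · refine Or.inl fun t ht ↦ ⟨?_, isMaxLevelInterval_extIoo_subset_Iset hmax ht⟩
    rwa [← density_eq ht] at hs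
  · refine Or.inr (Set.disjoint_left.2 fun t ht htS ↦ hs ?_)
    rw [← density_eq ht]
    exact htS.1

end Comparison

/-- The truncation of `x` at height `N`, set to `0` for `x ≤ ε`. -/
noncomputable def truncate (ε N x : ℝ≥0∞) : ℝ≥0∞ := if ε < x then min x N else 0

section LowerBound

variable {φ : ℝ → ℝ} {G : ℝ → ℝ≥0∞} {ε N x : ℝ≥0∞}

theorem truncate_le_self : truncate ε N x ≤ x := by
  rw [truncate]
  split_ifs
  exacts [min_le_left _ _, zero_le]

theorem truncate_le_right : truncate ε N x ≤ N := by
  rw [truncate]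
  split_ifs
  exacts [min_le_right _ _, zero_le]

theorem monotone_truncate (ε N : ℝ≥0∞) : Monotone (truncate ε N) := fun x y hxy ↦ by
  by_cases hx : ε < x
  · rw [truncate, truncate, if_pos hx, if_pos (hx.trans_le hxy)]
    exact min_le_min_right N hxy
  · rw [truncate, if_neg hx]
    exact zero_le

theorem truncate_le_truncate {ε' N' : ℝ≥0∞} (hε : ε' ≤ ε) (hN : N ≤ N') :
    truncate ε N x ≤ truncate ε' N' x := by
  by_cases hx : ε < x
  · rw [truncate, truncate, if_pos hx, if_pos (hε.trans_lt hx)]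
    exact min_le_min_left x hN
  · rw [truncate, if_neg hx]
    exact zero_le

theorem exists_truncate_eq (hx : x ≠ ∞) :
    ∃ n : ℕ, truncate ((n : ℝ≥0∞) + 1)⁻¹ (n + 1) x = x := by
  rcases eq_or_ne x 0 with rfl | hx_zero
  · exact ⟨0, le_zero_iff.1 truncate_le_self⟩
  obtain ⟨m, hm⟩ := ENNReal.exists_inv_nat_lt hx_zero
  obtain ⟨n, hn⟩ := ENNReal.exists_nat_gt hx
  have hm' : ((max m n : ℕ) + 1 : ℝ≥0∞)⁻¹ < x := by
    refine (ENNReal.inv_le_inv.2 (le_add_right ?_)).trans_lt hm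
    exact_mod_cast le_max_left m n
  have hn' : x ≤ (max m n : ℕ) + 1 := hn.le.trans <| le_add_right <| by
    exact_mod_cast le_max_right m n
  exact ⟨max m n, by rw [truncate, if_pos hm', min_eq_left hn']⟩

theorem IsOrlicz.measurable_phiE (hφ : IsOrlicz φ) : Measurable (phiE φ) :=
  hφ.monotone_phiE.measurable

theorem setLIntegral_add_mul_le_of_forall_add_mul_le {B : ℝ≥0∞ → ℝ≥0∞}
    {X c k : ℝ → ℝ≥0∞} {S : Set ℝ}
    (hB : Measurable B) (hG : Measurable G) (hX : Measurable X) (hk : Measurable k)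
    (hS : MeasurableSet S) (hX_zero : ∀ t ∈ S, X t ≠ 0) (hX_top : ∀ t ∈ S, X t ≠ ∞)
    (h : ∀ t ∈ S, ∀ y, B (k t) + c t * y ≤ B y + c t * k t) :
    (∫⁻ t in S, B (k t) * X t) + ∫⁻ t in S, c t * G t ≤
      (∫⁻ t in S, B (G t / X t) * X t) + ∫⁻ t in S, c t * (k t * X t) := by
  have left_meas : Measurable fun t ↦ B (k t) * X t := (hB.comp hk).mul hX
  have right_meas : Measurable fun t ↦ B (G t / X t) * X t := (hB.comp (hG.div hX)).mul hX
  rw [← lintegral_add_left left_meas, ← lintegral_add_left right_meas]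
  refine setLIntegral_mono' hS fun t ht ↦ ?_
  calc B (k t) * X t + c t * G t = (B (k t) + c t * (G t / X t)) * X t := by
        rw [add_mul, mul_assoc, ENNReal.div_mul_cancel (hX_zero t ht) (hX_top t ht)]
    _ ≤ (B (G t / X t) + c t * k t) * X t := mul_le_mul_left (h t ht _) (X t)
    _ = B (G t / X t) * X t + c t * (k t * X t) := by rw [add_mul, mul_assoc]

namespace IsAdmissible

theorem lintegral_phiE_truncate_le (hv : IsAdmissible a w v) (hφ : IsOrlicz φ)
    (hG : Measurable G)
    (h : ∀ x : ℝ, 0 < x → ∫⁻ t in Ioo 0 x, v t ≤ ∫⁻ t in Ioo 0 x, G t) (hN : N ≠ ∞)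
    (hfin : ∫⁻ t in Iset a ∩ {t | ε < levelDensity a w v t}, weight w t ≠ ∞) :
    ∫⁻ t in Iset a, phiE φ (truncate ε N (levelDensity a w v t)) * weight w t ≤
      ∫⁻ t in Iset a, phiE φ (G t / weight w t) * weight w t := by
  obtain ⟨q, q_mono, hq, tangent⟩ := hφ.exists_monotone_subgradient_phiE
  set k := levelDensity a w v
  set T := truncate ε N
  set c : ℝ≥0∞ → ℝ≥0∞ := fun x ↦ ENNReal.ofReal (q (T x).toReal)
  have k_meas : Measurable k := levelDensity_antitone.measurable
  have T_ne_top (x : ℝ≥0∞) : T x ≠ ∞ := ne_top_of_le_ne_top hN truncate_le_right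
  have comparison : ∫⁻ t in Iset a, c (k t) * (T (k t) * weight w t) ≤
      ∫⁻ t in Iset a, c (k t) * G t := by
    refine (lintegral_mono fun t ↦ ?_).trans (hv.lintegral_levelRep_le hG h
      (fun x y hxy ↦ q_mono (ENNReal.toReal_mono (T_ne_top y) (monotone_truncate ε N hxy)))
      fun x ↦ hq _)
    exact mul_le_mul_right (mul_le_mul_left truncate_le_self _) _
  have tangent_term_ne_top : ∫⁻ t in Iset a, c (k t) * (T (k t) * weight w t) ≠ ∞ := by
    set C := ENNReal.ofReal (q N.toReal) * N
    have superlevel_meas : MeasurableSet {t | ε < k t} := measurableSet_lt measurable_const k_meas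
    have bound (t : ℝ) : c (k t) * (T (k t) * weight w t) ≤
        {t | ε < k t}.indicator (fun t ↦ C * weight w t) t := by
      by_cases ht : ε < k t
      · rw [indicator_of_mem (mem_ofPred_eq ▸ ht), ← mul_assoc]
        exact mul_le_mul_left (mul_le_mul' (ENNReal.ofReal_le_ofReal
          (q_mono (ENNReal.toReal_mono hN truncate_le_right))) truncate_le_right) _
      · simp [T, truncate, ht]
    refine ne_top_of_le_ne_top ?_ (lintegral_mono bound)
    rw [setLIntegral_indicator superlevel_meas, inter_comm,
      lintegral_const_mul _ hv.measurable_weight]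
    exact ENNReal.mul_ne_top (ENNReal.mul_ne_top ENNReal.ofReal_ne_top hN) hfin
  refine (ENNReal.add_le_add_iff_right tangent_term_ne_top).1
    ((add_le_add_right comparison _).trans ?_)
  exact setLIntegral_add_mul_le_of_forall_add_mul_le hφ.measurable_phiE hG hv.measurable_weight
    ((monotone_truncate ε N).measurable.comp k_meas) (measurableSet_Iset a)
    (fun t ht ↦ hv.weight_ne_zero ht) (fun t _ ↦ ENNReal.ofReal_ne_top)
    fun t _ y ↦ tangent _ y (T_ne_top _)

theorem lintegral_phiE_levelDensity_le (hv : IsAdmissible a w v) (hφ : IsOrlicz φ)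
    (h : ∀ (n : ℕ), ∫⁻ t in Iset a, phiE φ (truncate ((n : ℝ≥0∞) + 1)⁻¹ (n + 1)
      (levelDensity a w v t)) * weight w t ≤ x) :
    ∫⁻ t in Iset a, phiE φ (levelDensity a w v t) * weight w t ≤ x := by
  set F : ℕ → ℝ → ℝ≥0∞ := fun n t ↦
    phiE φ (truncate ((n : ℝ≥0∞) + 1)⁻¹ (n + 1) (levelDensity a w v t)) * weight w t
  have F_meas (n : ℕ) : Measurable (F n) := (hφ.measurable_phiE.comp
    ((monotone_truncate _ _).measurable.comp levelDensity_antitone.measurable)).mul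
      hv.measurable_weight
  have F_mono : Monotone F := fun m n hmn t ↦ by
    have hmn' : (m : ℝ≥0∞) + 1 ≤ n + 1 := by gcongr
    exact mul_le_mul_left
      (hφ.monotone_phiE (truncate_le_truncate (ENNReal.inv_le_inv.2 hmn') hmn')) _
  calc ∫⁻ t in Iset a, phiE φ (levelDensity a w v t) * weight w t
      ≤ ∫⁻ t in Iset a, ⨆ n, F n t := setLIntegral_mono' (measurableSet_Iset a) fun t ht ↦ by
        obtain ⟨n, hn⟩ := exists_truncate_eq (hv.levelDensity_ne_top ht)
        refine le_iSup_of_le n ?_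
        simp only [F, hn, le_rfl]
    _ = ⨆ n, ∫⁻ t in Iset a, F n t := lintegral_iSup F_meas F_mono
    _ ≤ x := iSup_le h

end IsAdmissible

theorem IsWeight.frequently_lt_Rq_of_lintegral_eq_top (hw : IsWeight a w)
    (htop : ∫⁻ t in Iset a ∩ {t | ε < levelDensity a w v t}, weight w t = ∞) :
    a = ∞ ∧ primitive (weight w) ∞ = ∞ ∧ ∃ᶠ s in atTop, ε < Rq w v 0 s := by
  obtain ⟨-, ha, hW⟩ := hw.eq_top_of_notMem_finiteEnds le_rfl fun ha ↦ ha.2 <|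
    top_unique (htop.ge.trans (lintegral_mono_set inter_subset_left))
  refine ⟨ha, hW, frequently_atTop.2 fun M ↦ ?_⟩
  have exists_superlevel : ∃ t > M, t ∈ Iset a ∧ ε < levelDensity a w v t := by
    by_contra! hle
    have hM : ENNReal.ofReal (M + 1) ∈ finiteEnds a w :=
      hw.mem_finiteEnds_of_lt (ha ▸ ENNReal.ofReal_lt_top)
    refine hM.2 (top_unique (htop.ge.trans ?_))
    rw [primitive_ofReal]
    refine lintegral_mono_set fun t ht ↦ ⟨ht.1.1, ?_⟩
    by_contra! hMt
    exact (hle t (by linarith) ht.1).not_gt ht.2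
  obtain ⟨t, hMt, ht, hlt⟩ := exists_superlevel
  obtain ⟨s, hts, -, hs⟩ := exists_lt_Rq_of_lt_levelDensity hlt le_rfl ht.1
  exact ⟨s, (hMt.trans hts).le, hs⟩

theorem IsWeight.mul_primitive_le_of_le_Rq (hw : IsWeight a w) {B : ℝ≥0∞ → ℝ≥0∞} {c ρ : ℝ≥0∞}
    {s : ℝ} (hB : Measurable B) (hG : Measurable G) (hρ : ρ ≠ ∞) (hc : c ≠ ∞)
    (tangent : ∀ y, B ρ + c * y ≤ B y + c * ρ) (hs : s ∈ Iset a)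
    (h : ∫⁻ t in Ioo 0 s, v t ≤ ∫⁻ t in Ioo 0 s, G t) (hle : ρ + ρ ≤ Rq w v 0 s) :
    c * ρ * primitive (weight w) (.ofReal s) ≤
      ∫⁻ t in Iset a, B (G t / weight w t) * weight w t := by
  have Ioo_subset : Ioo 0 s ⊆ Iset a := Iset_ofReal s ▸ Iset_mono hs.2.le
  have weight_ne_top := hw.primitive_ne_top s hs
  rw [primitive_ofReal] at weight_ne_top ⊢
  set V := ∫⁻ t in Ioo 0 s, weight w t
  rw [mul_assoc]
  refine (ENNReal.add_le_add_iff_right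
    (ENNReal.mul_ne_top hc (ENNReal.mul_ne_top hρ weight_ne_top) : c * (ρ * V) ≠ ∞)).1 ?_
  calc c * (ρ * V) + c * (ρ * V) = c * ((ρ + ρ) * V) := by ring
    _ ≤ c * ∫⁻ t in Ioo 0 s, G t :=
        mul_le_mul_right ((ENNReal.mul_le_of_le_div hle).trans h) c
    _ = ∫⁻ t in Ioo 0 s, c * G t := (lintegral_const_mul c hG).symm
    _ ≤ (∫⁻ t in Ioo 0 s, B ρ * weight w t) + ∫⁻ t in Ioo 0 s, c * G t := le_add_self
    _ ≤ (∫⁻ t in Ioo 0 s, B (G t / weight w t) * weight w t) +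
          ∫⁻ t in Ioo 0 s, c * (ρ * weight w t) :=
        setLIntegral_add_mul_le_of_forall_add_mul_le hB hG hw.measurable_weight
          measurable_const measurableSet_Ioo (fun t ht ↦ hw.weight_ne_zero (Ioo_subset ht))
          (fun t _ ↦ ENNReal.ofReal_ne_top) fun t _ ↦ tangent
    _ ≤ (∫⁻ t in Iset a, B (G t / weight w t) * weight w t) + c * (ρ * V) := by
        rw [lintegral_const_mul c (hw.measurable_weight.const_mul ρ),
          lintegral_const_mul ρ hw.measurable_weight]
        exact add_le_add_left (lintegral_mono_set Ioo_subset) _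

theorem IsWeight.lintegral_phiE_eq_top (hw : IsWeight ∞ w) (hφ : IsOrlicz φ) (hG : Measurable G)
    (h : ∀ x : ℝ, 0 < x → ∫⁻ t in Ioo 0 x, v t ≤ ∫⁻ t in Ioo 0 x, G t) (hε : 0 < ε)
    (hW : primitive (weight w) ∞ = ∞) (hfreq : ∃ᶠ s in atTop, ε < Rq w v 0 s) :
    ∫⁻ t in Iset ∞, phiE φ (G t / weight w t) * weight w t = ∞ := by
  obtain ⟨q, -, -, tangent⟩ := hφ.exists_monotone_subgradient_phiE
  obtain ⟨ρ, hρ_pos, hρ_half⟩ : ∃ ρ, 0 < ρ ∧ ρ + ρ < ε := by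
    obtain ⟨d, hd, hdε⟩ := exists_between hε
    exact ⟨d / 2, ENNReal.half_pos hd.ne', by rwa [ENNReal.add_halves]⟩
  have hρ : ρ ≠ ∞ := ne_top_of_le_ne_top hρ_half.ne_top le_self_add
  set c := ENNReal.ofReal (q ρ.toReal)
  have c_pos : 0 < c := by
    have tangent_at_zero : phiE φ ρ + c * 0 ≤ phiE φ 0 + c * ρ := tangent ρ 0 hρ
    rw [hφ.phiE_zero, mul_zero, add_zero, zero_add, phiE_of_ne_top φ hρ] at tangent_at_zero
    refine pos_iff_ne_zero.2 fun hc ↦ ?_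
    rw [hc, zero_mul, le_zero_iff, ENNReal.ofReal_eq_zero] at tangent_at_zero
    exact tangent_at_zero.not_gt (hφ.pos _ (ENNReal.toReal_pos hρ_pos.ne' hρ))
  have htendsto := ENNReal.Tendsto.const_mul (tendsto_primitive_atTop hw.measurable_weight)
    (Or.inr (ENNReal.mul_ne_top ENNReal.ofReal_ne_top hρ : c * ρ ≠ ∞))
  rw [hW, ENNReal.mul_top (mul_ne_zero c_pos.ne' hρ_pos.ne')] at htendsto
  refine top_unique (le_of_tendsto_of_frequently htendsto ?_)
  exact (hfreq.and_eventually (eventually_gt_atTop 0)).mono fun s hs ↦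
    hw.mul_primitive_le_of_le_Rq hφ.measurable_phiE hG hρ ENNReal.ofReal_ne_top
      (fun y ↦ tangent ρ y hρ) ⟨hs.2, ENNReal.ofReal_lt_top⟩ (h s hs.2) (hρ_half.trans hs.1).le

theorem IsAdmissible.lintegral_phiE_le (hv : IsAdmissible a w v) (hφ : IsOrlicz φ)
    (hG : Measurable G)
    (h : ∀ x : ℝ, 0 < x → ∫⁻ t in Ioo 0 x, v t ≤ ∫⁻ t in Ioo 0 x, G t) :
    ∫⁻ t in Iset a, phiE φ (levelDensity a w v t) * weight w t ≤
      ∫⁻ t in Iset a, phiE φ (G t / weight w t) * weight w t := by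
  by_cases hfin : ∀ ε > 0, ∫⁻ t in Iset a ∩ {t | ε < levelDensity a w v t}, weight w t ≠ ∞
  · refine hv.lintegral_phiE_levelDensity_le hφ fun n ↦ ?_
    exact hv.lintegral_phiE_truncate_le hφ hG h (by simp) (hfin _ (by simp))
  · push Not at hfin
    obtain ⟨ε, hε, htop⟩ := hfin
    obtain ⟨rfl, hW, hfreq⟩ := hv.frequently_lt_Rq_of_lintegral_eq_top htop
    exact (hv.lintegral_phiE_eq_top hφ hG h hε hW hfreq).ge.trans' le_top

theorem IsAdmissible.lintegral_phiE_levelFun (hv : IsAdmissible a w v) (φ : ℝ → ℝ) :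
    ∫⁻ t in Iset a, phiE φ (levelFun a w v t / weight w t) * weight w t =
      ∫⁻ t in Iset a, phiE φ (levelDensity a w v t) * weight w t := by
  refine lintegral_congr_ae ?_
  filter_upwards [hv.levelFun_ae_eq, ae_restrict_mem (measurableSet_Iset a)] with t ht htI
  rw [ht, levelRep, ENNReal.mul_div_cancel_right (hv.weight_ne_zero htI)
    ENNReal.ofReal_ne_top]

end LowerBound

namespace IsAdmissible

theorem lintegral_rearr_toReal_levelRep_ne_top (hv : IsAdmissible a w v) (x : ℝ) :
    ∫⁻ t in Ioo 0 x, rearr (volI a) (fun t ↦ (levelRep a w v t).toReal) t ≠ ∞ := by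
  rw [hv.lintegral_Ioo_rearr_toReal_levelRep]
  exact hv.primitive_levelRep_ne_top (hv.min_mem_finiteEnds x)

theorem lintegral_rearr_le_lintegral_rearr_toReal_levelRep {f : ℝ → ℝ}
    (hf : IsAdmissible a w (rearr (volI a) f)) (x : ℝ) :
    ∫⁻ t in Ioo 0 x, rearr (volI a) f t ≤ ∫⁻ t in Ioo 0 x,
      rearr (volI a) (fun t ↦ (levelRep a w (rearr (volI a) f) t).toReal) t := by
  rw [hf.lintegral_Ioo_rearr_toReal_levelRep, lintegral_Ioo_rearr]
  exact hf.primitive_le_primitive_levelRep (min_le_right _ _)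

theorem lintegral_phiE_rearr_toReal_levelRep (hv : IsAdmissible a w v) (φ : ℝ → ℝ) :
    ∫⁻ t in Iset a, phiE φ (rearr (volI a) (fun t ↦ (levelRep a w v t).toReal) t / weight w t) *
        weight w t =
      ∫⁻ t in Iset a, phiE φ (levelFun a w v t / weight w t) * weight w t := by
  refine lintegral_congr_ae ?_
  filter_upwards [hv.levelFun_ae_eq, hv.rearr_toReal_levelRep_ae_eq] with t ht ht'
  rw [ht, ht']

end IsAdmissible

end Halperin

/-- For an Orlicz function `φ` and `f ∈ L₁ + M_W`,
`inf { ∫_I φ(g*/w)·w dm : g* locally integrable, f ≺ g } = ∫_I φ(f⁰/w)·w dm`,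
where `f⁰` is the Halperin level function of `f` with respect to `w`:
the modular `Q(f)` equals `M(f⁰)`. -/
theorem stmt_19 (a : ℝ≥0∞) (ha : 0 < a) (w : ℝ → ℝ)
    (hw_pos : ∀ x ∈ Iset a, 0 < w x) (hw_anti : AntitoneOn w (Iset a)) (hw_meas : Measurable w)
    (hW_fin : ∀ t ∈ Iset a, ∫⁻ s in Set.Ioo 0 t, ENNReal.ofReal (w s) ≠ ∞)
    (φ : ℝ → ℝ) (hφ_conv : ConvexOn ℝ (Set.Ici 0) φ) (hφ_zero : φ 0 = 0)
    (hφ_pos : ∀ t : ℝ, 0 < t → 0 < φ t)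
    (f : ℝ → ℝ) (hf : Measurable f)
    (hL1MW : ∃ u h : ℝ → ℝ, Measurable u ∧ Measurable h ∧
      (∀ᵐ x ∂(volI a), f x = u x + h x) ∧
      (∫⁻ x in Iset a, ENNReal.ofReal |u x|) ≠ ∞ ∧ MWnorm a w h ≠ ∞) :
    sInf {c : ℝ≥0∞ | ∃ g : ℝ → ℝ, Measurable g ∧
        (∀ x : ℝ, 0 < x → ∫⁻ t in Set.Ioo 0 x, rearr (volI a) g t ≠ ∞) ∧
        (∀ x : ℝ, 0 < x →
          ∫⁻ t in Set.Ioo 0 x, rearr (volI a) f t ≤ ∫⁻ t in Set.Ioo 0 x, rearr (volI a) g t) ∧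
        c = ∫⁻ t in Iset a,
              phiE φ (rearr (volI a) g t / ENNReal.ofReal (w t)) * ENNReal.ofReal (w t)}
      = ∫⁻ t in Iset a,
          phiE φ (levelFun a w (rearr (volI a) f) t / ENNReal.ofReal (w t)) *
            ENNReal.ofReal (w t) := by
  have hw : Halperin.IsWeight a w := ⟨hw_pos, hw_anti, hw_meas, fun t ht ↦ by
    rw [Halperin.primitive_ofReal]
    exact hW_fin t ht⟩
  have hφ : Halperin.IsOrlicz φ := ⟨hφ_conv, hφ_zero, hφ_pos⟩
  obtain ⟨u, h, hu, -, hfuh, hu_int, hh⟩ := hL1MW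
  have hv : Halperin.IsAdmissible a w (rearr (volI a) f) :=
    hw.isAdmissible_rearr hu hfuh hu_int hh
  refine le_antisymm (sInf_le ?_) (le_sInf ?_)
  · exact ⟨fun t ↦ (Halperin.levelRep a w (rearr (volI a) f) t).toReal,
      hv.measurable_levelRep.ennreal_toReal,
      fun x _ ↦ hv.lintegral_rearr_toReal_levelRep_ne_top x,
      fun x _ ↦ hv.lintegral_rearr_le_lintegral_rearr_toReal_levelRep x,
      (hv.lintegral_phiE_rearr_toReal_levelRep φ).symm⟩
  · rintro _ ⟨g, -, -, hfg, rfl⟩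
    rw [hv.lintegral_phiE_levelFun φ]
    exact hv.lintegral_phiE_le hφ (Halperin.rearr_antitone _ g).measurable hfg
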